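/- For every constant M there exists a constant A = A(M) > 0 such that the following holds. Let Π be a set of n planes and S a set of k spheres in ℝ³ such that there are no M planes of Π and 3 spheres of S with every one of these planes tangent to every one of these spheres, and no 3 planes of Π and M spheres of S with every one of these planes tangent to every one of these spheres (i.e., the plane-sphere tangency graph contains no K_{M,3} and no K_{3,M}). Then the number T(Π,S) of tangent pairs satisfies T(Π,S) ≤ A · ( n^{3/4} k^{3/4} + n + k ). -/

import Mathlib

open scoped RealInnerProductSpace

noncomputable section

abbrev Pt3 := EuclideanSpace ℝ (Fin 3)

/-- A plane in space, given by a nonzero normal vector and an offset. -/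
def IsPlane3 (s : Set Pt3) : Prop :=
  ∃ u : Pt3, ∃ d : ℝ, u ≠ 0 ∧ s = {x : Pt3 | ⟪u, x⟫ = d}

/-- A sphere in space: a metric sphere with positive radius. -/
def IsSphere3 (s : Set Pt3) : Prop :=
  ∃ c : Pt3, ∃ r : ℝ, 0 < r ∧ s = Metric.sphere c r

/-- Two subsets of space are tangent if they intersect in exactly one point. -/
def Tangent3 (a b : Set Pt3) : Prop := ∃ p : Pt3, a ∩ b = {p}

/-!
Oriented planes are points of the quadric `x₀² + x₁² + x₂² = x₄²` in projective 4-space, and each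
sphere gives two hyperplanes, so tangencies become point-hyperplane incidences on a quadric.

Represent the points by their Veronese vectors of degree `D + 1`. On a subset minimising the ratio
`l` of rank to cardinality, the vectors can be rescaled so that the orthogonal projection `A` onto
the column space of their matrix has nearly constant diagonal `l`. Macaulay's growth bound shows
that a hyperplane section with many points has low rank, and a principal submatrix of `A` with low
rank and large trace has large entries off the diagonal. If the edge `p – q` has the weight
`A p q ^ 2`, then every rich section carries many heavy paths `p – q – r` on three distinct points.
But three points lie on at most `M` of the hyperplanes, and the total weight of the paths with
middle vertex `q` is at most `A q q ^ 2` because `A` is a projection. This bounds the incidences of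
the subset. There are `O(D ^ 3)` independent monomials of degree `D + 1` on the quadric, so `l` is
small, and the optimal `D` gives about `m ^ (-1/4) * k ^ (3/4)` incidences for each point of the
subset, where `m` is the number of points. Removing the subset and iterating, one sums this to
`n ^ (3/4) * k ^ (3/4)`.
-/

namespace PlaneSphere

open Finset Module Matrix Submodule

section Basis

variable {ι α K E : Type*} [DivisionRing K] [AddCommGroup E] [Module K E] [LinearOrder α]

open Classical in
/-- The members of `s` that the greedy algorithm keeps when it scans `s` in increasing order of
`f`: those `i` whose vector `v i` is not in the span of the vectors scanned earlier. -/
def freshIndices (K : Type*) [DivisionRing K] [Module K E] (v : ι → E) (f : ι → α)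
    (s : Finset ι) : Finset ι :=
  {i ∈ s | v i ∉ span K (v '' {j | j ∈ s ∧ f j < f i})}

theorem mem_freshIndices {v : ι → E} {f : ι → α} {s : Finset ι} {i : ι} :
    i ∈ freshIndices K v f s ↔ i ∈ s ∧ v i ∉ span K (v '' {j | j ∈ s ∧ f j < f i}) := by
  simp [freshIndices]

open Classical in
theorem freshIndices_insert {v : ι → E} {f : ι → α} {s : Finset ι} {a : ι}
    (hlt : ∀ i ∈ s, f i < f a) :
    freshIndices K v f (insert a s) =
      if v a ∈ span K (v '' s) then freshIndices K v f s
      else insert a (freshIndices K v f s) := by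
  have below_a : {j | j ∈ insert a s ∧ f j < f a} = (s : Set ι) := by
    ext j
    have := hlt j
    grind
  have below : ∀ i ∈ s, {j | j ∈ insert a s ∧ f j < f i} = {j | j ∈ s ∧ f j < f i} := by
    intro i hi
    ext j
    have := hlt i hi
    grind
  have ha : a ∉ s := fun h => (hlt a h).false
  have a_mem : a ∈ freshIndices K v f (insert a s) ↔ v a ∉ span K (v '' s) := by
    simp [mem_freshIndices, below_a, -Finset.mem_insert, Finset.mem_insert_self]
  have mem_iff : ∀ i ≠ a, i ∈ freshIndices K v f (insert a s) ↔ i ∈ freshIndices K v f s := by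
    intro i hia
    rw [mem_freshIndices, mem_freshIndices, Finset.mem_insert, or_iff_right hia]
    exact and_congr_right fun hi => by rw [below i hi]
  have a_notMem : a ∉ freshIndices K v f s := fun h => ha (mem_freshIndices.1 h).1
  ext i
  rcases eq_or_ne i a with rfl | hia
  · split_ifs with hva <;> simp [a_mem, a_notMem, hva]
  · split_ifs <;> simp [mem_iff i hia, hia]

variable {f : ι → α}

theorem linearIndepOn_freshIndices_and_span_eq (hf : Function.Injective f) (v : ι → E)
    (s : Finset ι) :
    LinearIndepOn K v (freshIndices K v f s : Set ι) ∧
      span K (v '' freshIndices K v f s) = span K (v '' s) := by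
  classical
  induction s using Finset.induction_on_max_value f with
  | empty => simp [freshIndices]
  | insert a s ha hmax ih =>
    have hlt : ∀ i ∈ s, f i < f a := fun i hi =>
      (hmax i hi).lt_of_ne fun h => ha (hf h ▸ hi)
    rw [freshIndices_insert hlt]
    split_ifs with hva
    · refine ⟨ih.1, ih.2.trans ?_⟩
      rw [Finset.coe_insert, Set.image_insert_eq, Submodule.span_insert_eq_span hva]
    · simp only [Finset.coe_insert]
      refine ⟨ih.1.insert (by rwa [ih.2]), ?_⟩
      rw [Set.image_insert_eq, Set.image_insert_eq, Submodule.span_insert, ih.2,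
        Submodule.span_insert]

theorem card_freshIndices (hf : Function.Injective f) (v : ι → E) (s : Finset ι) :
    #(freshIndices K v f s) = finrank K (span K (v '' s)) := by
  obtain ⟨hli, hspan⟩ := linearIndepOn_freshIndices_and_span_eq (K := K) hf v s
  have := finrank_span_eq_card hli
  rw [← hspan, Set.image_eq_range]
  simpa using this.symm

open Classical in
theorem card_freshIndices_of_lowerSet (v : ι → E) {s t : Finset ι} (hts : t ⊆ s)
    (ht : ∀ i ∈ t, ∀ j ∈ s, f j < f i → j ∈ t) :
    #(freshIndices K v f t) = #{i ∈ t | i ∈ freshIndices K v f s} := by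
  congr 1
  ext i
  simp only [mem_freshIndices, Finset.mem_filter]
  refine and_congr_right fun hi => ?_
  have : {j | j ∈ t ∧ f j < f i} = {j | j ∈ s ∧ f j < f i} := by
    ext j
    exact ⟨fun h => ⟨hts h.1, h.2⟩, fun h => ⟨ht i hi j h.1 h.2, h.2⟩⟩
  rw [this, and_iff_right (hts hi)]

end Basis

theorem finrank_span_image_comp {ι K E E' : Type*} [DivisionRing K] [AddCommGroup E] [Module K E]
    [AddCommGroup E'] [Module K E'] {g : E →ₗ[K] E'} (hg : Function.Injective g) (v : ι → E)
    (s : Set ι) : finrank K (span K ((g ∘ v) '' s)) = finrank K (span K (v '' s)) := by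
  rw [Set.image_comp, ← Submodule.map_span]
  exact (Submodule.equivMapOfInjective g hg _).finrank_eq.symm

section Balanced

theorem mul_sum_le_sum_mul_of_forall_sum_nonneg {ι α : Type*} [LinearOrder α] {f : ι → α}
    (hf : Function.Injective f) {t β : ι → ℝ} (ht : ∀ i j, f i ≤ f j → t j ≤ t i) (s : Finset ι)
    (hβ : ∀ i ∈ s, 0 ≤ ∑ j ∈ s with f j ≤ f i, β j) {c : ℝ} (hc : ∀ i ∈ s, c ≤ t i) :
    c * ∑ i ∈ s, β i ≤ ∑ i ∈ s, β i * t i := by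
  classical
  induction s using Finset.induction_on_max_value f generalizing c with
  | empty => simp
  | insert a s ha hmax ih =>
    have hlt : ∀ i ∈ s, f i < f a := fun i hi =>
      (hmax i hi).lt_of_ne fun h => ha (hf h ▸ hi)
    have hs : ∀ i ∈ s, 0 ≤ ∑ j ∈ s with f j ≤ f i, β j := by
      intro i hi
      simpa [Finset.filter_insert, (hlt i hi).not_ge] using hβ i (Finset.mem_insert_of_mem hi)
    have hsum : 0 ≤ β a + ∑ i ∈ s, β i := by
      have := hβ a (Finset.mem_insert_self a s)
      rwa [Finset.filter_true_of_mem (by simpa using hmax), Finset.sum_insert ha] at this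
    have hs_le := ih hs fun i hi => ht i a (hmax i hi)
    have hca := hc a (Finset.mem_insert_self a s)
    rw [Finset.sum_insert ha, Finset.sum_insert ha]
    nlinarith

variable {ι E : Type*} [AddCommGroup E] [Module ℝ E]

/-- A family of vectors is balanced with weight `l` if the constant vector `l` lies in the base
polytope of its linear matroid. This is the Barthe–Edmonds condition under which the family can be
rescaled so that all leverages become equal to `l`. -/
structure IsBalanced [Fintype ι] (v : ι → E) (l : ℝ) : Prop where
  mul_card_eq : l * Fintype.card ι = finrank ℝ (span ℝ (Set.range v))
  mul_card_le (Q : Finset ι) : l * #Q ≤ finrank ℝ (span ℝ (v '' Q))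

theorem IsBalanced.exists_linearIndepOn_mul_sum_le [Fintype ι] {v : ι → E} {l : ℝ}
    (h : IsBalanced v l) (t : ι → ℝ) :
    ∃ B : Finset ι, LinearIndepOn ℝ v (B : Set ι) ∧ span ℝ (v '' B) = span ℝ (Set.range v) ∧
      l * ∑ i, t i ≤ ∑ i ∈ B, t i := by
  classical
  let f : ι → ℝ ×ₗ Fin (Fintype.card ι) := fun i => toLex (-t i, Fintype.equivFin ι i)
  have hf : Function.Injective f := fun i j hij => by
    simpa [f] using congrArg (fun z => (ofLex z).2) hij
  have hft : ∀ i j, f i ≤ f j → t j ≤ t i := fun i j hij => by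
    simpa [f] using Prod.Lex.monotone_fst _ _ hij
  set B := freshIndices ℝ v f univ with hB
  obtain ⟨hli, hspan⟩ := linearIndepOn_freshIndices_and_span_eq (K := ℝ) hf v univ
  rw [coe_univ, Set.image_univ] at hspan
  refine ⟨B, hli, hspan, ?_⟩
  let β : ι → ℝ := fun i => (if i ∈ B then 1 else 0) - l
  have sum_β (s : Finset ι) : ∑ i ∈ s, β i = #{i ∈ s | i ∈ B} - l * #s := by
    simp only [β, Finset.sum_sub_distrib, Finset.sum_boole, Finset.sum_const, nsmul_eq_mul,
      mul_comm]
  have sum_β_nonneg : ∀ i ∈ univ, 0 ≤ ∑ j ∈ univ with f j ≤ f i, β j := by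
    intro i _
    rw [sum_β, sub_nonneg, ← card_freshIndices_of_lowerSet v (subset_univ _),
      card_freshIndices hf]
    · exact h.mul_card_le _
    · intro j hj k _ hkj
      simp only [Finset.mem_filter_univ] at hj ⊢
      exact hkj.le.trans hj
  have sum_β_univ : ∑ i, β i = 0 := by
    have := card_freshIndices (K := ℝ) hf v univ
    rw [coe_univ, Set.image_univ] at this
    rw [sum_β, Finset.filter_univ_mem, hB, this, card_univ, h.mul_card_eq, sub_self]
  obtain ⟨c, hc⟩ := (Set.finite_range t).bddBelow
  have key := mul_sum_le_sum_mul_of_forall_sum_nonneg hf hft univ sum_β_nonneg (c := c)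
    fun i _ => hc (Set.mem_range_self i)
  simpa [sum_β_univ, β, sub_mul, Finset.sum_sub_distrib, ← Finset.mul_sum] using key

/-- The extremal choice is a subset minimising the ratio of rank to cardinality. -/
theorem exists_isBalanced_subset {v : ι → E} {P : Finset ι} (hP : P.Nonempty)
    (hv : ∀ i ∈ P, v i ≠ 0) :
    ∃ Q ⊆ P, Q.Nonempty ∧ ∃ l : ℝ, 0 < l ∧ l * #P ≤ finrank ℝ (span ℝ (v '' P)) ∧
      IsBalanced (fun i : Q => v i) l := by
  classical
  let ratio : Finset ι → ℝ := fun Q => finrank ℝ (span ℝ (v '' Q)) / #Q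
  obtain ⟨Q, hQmem, hmin⟩ := (P.powerset.filter Finset.Nonempty).exists_min_image ratio
    ⟨P, by simpa using hP⟩
  simp only [Finset.mem_filter, Finset.mem_powerset, and_imp] at hQmem hmin
  obtain ⟨hQP, hQ⟩ := hQmem
  have hcard {R : Finset ι} (hR : R.Nonempty) : (0 : ℝ) < #R := by exact_mod_cast hR.card_pos
  have ratio_mul (R : Finset ι) (hR : R.Nonempty) :
      ratio R * #R = finrank ℝ (span ℝ (v '' R)) := div_mul_cancel₀ _ (hcard hR).ne'
  have mul_card_le (R : Finset ι) (hRP : R ⊆ P) :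
      ratio Q * #R ≤ finrank ℝ (span ℝ (v '' R)) := by
    rcases R.eq_empty_or_nonempty with rfl | hR
    · simp
    · rw [← ratio_mul R hR]
      gcongr
      exact hmin R hRP hR
  refine ⟨Q, hQP, hQ, ratio Q, ?_, mul_card_le P subset_rfl, ?_, fun R => ?_⟩
  · obtain ⟨i, hi⟩ := hQ
    have : FiniteDimensional ℝ (span ℝ (v '' Q)) := .span_of_finite ℝ (Q.finite_toSet.image v)
    have hne : span ℝ (v '' Q) ≠ ⊥ := fun h =>
      hv i (hQP hi) ((Submodule.span_eq_bot.1 h) _ ⟨i, hi, rfl⟩)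
    have := Submodule.one_le_finrank_iff.2 hne
    exact div_pos (by exact_mod_cast this) (hcard ⟨i, hi⟩)
  · rw [Fintype.card_coe, ratio_mul Q hQ, Set.image_eq_range]
    rfl
  · have hR : (R.map (.subtype _) : Finset ι) ⊆ P := fun i hi => by
      obtain ⟨j, -, rfl⟩ := Finset.mem_map.1 hi
      exact hQP j.2
    have := mul_card_le _ hR
    rwa [Finset.card_map, Finset.coe_map, Set.image_image] at this

end Balanced

/-- Ekeland-type argument: minimise `F + ε‖·‖`, which is coercive. -/
theorem exists_forall_hasLineDerivAt_abs_le {E : Type*} [NormedAddCommGroup E] [NormedSpace ℝ E]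
    [ProperSpace E] {F : E → ℝ} (hF : Continuous F) (hbdd : BddBelow (Set.range F)) {ε : ℝ}
    (hε : 0 < ε) : ∃ x, ∀ v d, HasLineDerivAt ℝ F d x v → |d| ≤ ε * ‖v‖ := by
  obtain ⟨m, hm⟩ := hbdd
  replace hm : ∀ x, m ≤ F x := fun x => hm (Set.mem_range_self x)
  obtain ⟨x, hx⟩ : ∃ x, ∀ y, F x + ε * ‖x‖ ≤ F y + ε * ‖y‖ := by
    refine (by fun_prop : Continuous fun x => F x + ε * ‖x‖).exists_forall_le' 0 ?_
    filter_upwards [(tendsto_norm_cocompact_atTop (E := E)).eventually_ge_atTop ((F 0 - m) / ε)]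
      with y hy
    rw [div_le_iff₀' hε] at hy
    simpa using by linarith [hm y]
  have neg_le (v : E) (d : ℝ) (hd : HasLineDerivAt ℝ F d x v) : -(ε * ‖v‖) ≤ d := by
    refine ge_of_tendsto hd.tendsto_slope_zero_right ?_
    filter_upwards [self_mem_nhdsWithin] with h (hh : 0 < h)
    have hnorm : ‖x + h • v‖ ≤ ‖x‖ + h * ‖v‖ :=
      (norm_add_le _ _).trans_eq (by rw [norm_smul, Real.norm_of_nonneg hh.le])
    rw [smul_eq_mul, inv_mul_eq_div, le_div_iff₀ hh]
    nlinarith [hx (x + h • v)]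
  refine ⟨x, fun v d hd => abs_le.2 ⟨neg_le v d hd, ?_⟩⟩
  have := neg_le _ _ (hd.smul (-1))
  simp only [norm_smul, norm_neg, norm_one, smul_eq_mul] at this
  linarith

section ScaleRows

variable {ι κ : Type*} [Fintype ι] [DecidableEq ι]

/-- The rows of `W` rescaled by `exp (t p / 2)`, so that the Gram matrix weights row `p` by
`exp (t p)`. -/
def scaleRows (W : Matrix ι κ ℝ) (t : ι → ℝ) : Matrix ι κ ℝ :=
  diagonal (fun p => Real.exp (t p / 2)) * W

theorem scaleRows_apply (W : Matrix ι κ ℝ) (t : ι → ℝ) (p : ι) (k : κ) :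
    scaleRows W t p k = Real.exp (t p / 2) * W p k :=
  diagonal_mul _ _ _ _

theorem scaleRows_transpose_mul_self_add_single (W : Matrix ι κ ℝ) (t : ι → ℝ) (p : ι) (h : ℝ) :
    (scaleRows W (t + h • Pi.single p 1))ᵀ * scaleRows W (t + h • Pi.single p 1) =
      (scaleRows W t)ᵀ * scaleRows W t +
        (Real.exp h - 1) • vecMulVec (scaleRows W t p) (scaleRows W t p) := by
  have hexp (x y : ℝ) (k k' : κ) (q : ι) : Real.exp (x / 2) * W q k * (Real.exp (y / 2) * W q k') =
      Real.exp ((x + y) / 2) * (W q k * W q k') := by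
    rw [add_div, Real.exp_add]
    ring
  have hother : ∀ q ∈ univ.erase p, (t + h • Pi.single p 1 : ι → ℝ) q = t q := by
    intro q hq
    simp [Finset.ne_of_mem_erase hq]
  have hp : (t + h • Pi.single p 1 : ι → ℝ) p = t p + h := by simp
  ext i j
  simp only [Matrix.mul_apply, Matrix.add_apply, transpose_apply, Matrix.smul_apply,
    vecMulVec_apply, scaleRows_apply, smul_eq_mul, hexp, add_self_div_two]
  rw [← Finset.add_sum_erase _ _ (mem_univ p),
    ← Finset.add_sum_erase univ (fun q => Real.exp (t q) * (W q i * W q j)) (mem_univ p),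
    Finset.sum_congr rfl fun q hq => by rw [hother q hq], hp, Real.exp_add]
  ring

theorem span_row_scaleRows_le (W : Matrix ι κ ℝ) (t : ι → ℝ) (Q : Set ι) :
    span ℝ ((scaleRows W t).row '' Q) ≤ span ℝ (W.row '' Q) := by
  rw [Submodule.span_le]
  rintro _ ⟨p, hp, rfl⟩
  have : (scaleRows W t).row p = Real.exp (t p / 2) • W.row p := funext (scaleRows_apply W t p)
  rw [this]
  exact Submodule.smul_mem _ _ (subset_span ⟨p, hp, rfl⟩)

end ScaleRows

section Scaling

variable {ι κ : Type*} [Fintype κ] [DecidableEq κ]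

theorem one_le_det_one_add {P : Matrix κ κ ℝ} (hP : P.PosSemidef) : 1 ≤ (1 + P).det := by
  have hH : (1 + P).IsHermitian := isHermitian_one.add hP.isHermitian
  rw [hH.det_eq_prod_eigenvalues]
  refine Finset.one_le_prod fun i => ?_
  have hunit : star ⇑(hH.eigenvectorBasis i) ⬝ᵥ ⇑(hH.eigenvectorBasis i) = 1 := by
    rw [dotProduct_comm, ← EuclideanSpace.inner_eq_star_dotProduct, real_inner_self_eq_norm_sq,
      hH.eigenvectorBasis.orthonormal.1 i, one_pow]
  have hnonneg := hP.dotProduct_mulVec_nonneg ⇑(hH.eigenvectorBasis i)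
  have := hH.eigenvalues_eq i
  rw [add_mulVec, one_mulVec, dotProduct_add, hunit] at this
  simpa [this] using hnonneg

theorem det_le_det_add_transpose_mul_self [Fintype ι] {A : Matrix κ κ ℝ} (hA : A.PosDef)
    (C : Matrix ι κ ℝ) : A.det ≤ (A + Cᵀ * C).det := by
  classical
  have hP : (C * A⁻¹ * Cᵀ).PosSemidef := by
    simpa using hA.inv.posSemidef.mul_mul_conjTranspose_same C
  rw [det_add_mul _ _ hA.det_pos.ne'.isUnit]
  exact le_mul_of_one_le_right hA.det_pos.le (one_le_det_one_add hP)

/-- The consequence of the Cauchy–Binet formula obtained by keeping a single term. -/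
theorem det_submatrix_sq_le_det_transpose_mul_self [Fintype ι] (V : Matrix ι κ ℝ) {g : κ → ι}
    (hg : Function.Injective g) : (V.submatrix g id).det ^ 2 ≤ (Vᵀ * V).det := by
  classical
  rcases eq_or_ne (V.submatrix g id).det 0 with h0 | h0
  · have : (Vᵀ * V).PosSemidef := by simpa using posSemidef_conjTranspose_mul_self V
    simpa [h0] using this.det_nonneg
  let C : Matrix {p // p ∉ Set.range g} κ ℝ := V.submatrix (↑) id
  have hV : Vᵀ * V = (V.submatrix g id)ᵀ * V.submatrix g id + Cᵀ * C := by
    ext i j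
    simp only [C, Matrix.add_apply, Matrix.mul_apply, transpose_apply, submatrix_apply, id]
    rw [← Fintype.sum_subtype_add_sum_subtype (· ∈ Set.range g) fun p => V p i * V p j]
    congr 1
    convert (Fintype.sum_equiv (Equiv.ofInjective g hg) (fun k => V (g k) i * V (g k) j)
      (fun p => V p i * V p j) fun _ => rfl).symm
  have hpos : ((V.submatrix g id)ᵀ * V.submatrix g id).PosDef := by
    simpa using PosDef.conjTranspose_mul_self (V.submatrix g id)
      (mulVec_injective_of_isUnit ((isUnit_iff_isUnit_det _).2 h0.isUnit))
  calc (V.submatrix g id).det ^ 2 = ((V.submatrix g id)ᵀ * V.submatrix g id).det := by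
        rw [det_mul, det_transpose, sq]
    _ ≤ (Vᵀ * V).det := hV ▸ det_le_det_add_transpose_mul_self hpos C

/-- The hat matrix of `V`: the orthogonal projection onto the column space of `V`, provided `V` has
full column rank. Its diagonal entries are the leverages of the rows of `V`. -/
def hatMatrix (V : Matrix ι κ ℝ) [Fintype ι] : Matrix ι ι ℝ :=
  V * (Vᵀ * V)⁻¹ * Vᵀ

theorem hatMatrix_isStarProjection [Fintype ι] {V : Matrix ι κ ℝ} (hV : (Vᵀ * V).det ≠ 0) :
    IsStarProjection (hatMatrix V) where
  isIdempotentElem := calc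
    V * (Vᵀ * V)⁻¹ * Vᵀ * (V * (Vᵀ * V)⁻¹ * Vᵀ)
      = V * ((Vᵀ * V)⁻¹ * (Vᵀ * V)) * (Vᵀ * V)⁻¹ * Vᵀ := by simp only [Matrix.mul_assoc]
    _ = V * (Vᵀ * V)⁻¹ * Vᵀ := by rw [nonsing_inv_mul _ hV.isUnit, Matrix.mul_one]
  isSelfAdjoint := by
    rw [isSelfAdjoint_iff, star_eq_conjTranspose, conjTranspose_eq_transpose_of_trivial, hatMatrix,
      transpose_mul, transpose_mul, transpose_transpose, transpose_nonsing_inv, transpose_mul,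
      transpose_transpose, Matrix.mul_assoc]

theorem rank_submatrix_hatMatrix_le [Fintype ι] (V : Matrix ι κ ℝ) (Q : Finset ι) :
    ((hatMatrix V).submatrix ((↑) : Q → ι) ((↑) : Q → ι)).rank ≤
      finrank ℝ (span ℝ (V.row '' Q)) := by
  have hfactor : (hatMatrix V).submatrix ((↑) : Q → ι) ((↑) : Q → ι) =
      V.submatrix ((↑) : Q → ι) id * ((Vᵀ * V)⁻¹ * Vᵀ).submatrix id ((↑) : Q → ι) := by
    rw [hatMatrix, Matrix.mul_assoc, submatrix_mul _ _ _ id _ Function.bijective_id]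
  rw [hfactor]
  refine (rank_mul_le_left _ _).trans_eq ?_
  rw [rank_eq_finrank_span_row, Set.image_eq_range]
  rfl

theorem det_transpose_mul_self_add_smul_vecMulVec [Fintype ι] {V : Matrix ι κ ℝ}
    (hV : (Vᵀ * V).det ≠ 0) (p : ι) (a : ℝ) :
    (Vᵀ * V + a • vecMulVec (V p) (V p)).det = (Vᵀ * V).det * (1 + a * hatMatrix V p p) := by
  classical
  rw [← smul_vecMulVec, vecMulVec_eq Unit, det_add_replicateCol_mul_replicateRow hV.isUnit,
    det_unique (n := Unit)]
  rw [Matrix.add_apply, one_apply_eq]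
  congr 2
  calc (replicateRow Unit (V p) * (Vᵀ * V)⁻¹ * replicateCol Unit (a • V p)) default default
      = (V p ᵥ* (Vᵀ * V)⁻¹) ⬝ᵥ (a • V p) := rfl
    _ = a * hatMatrix V p p := dotProduct_smul a _ _

variable [Fintype ι]

theorem IsBalanced.exists_injective_det_ne_zero {W : Matrix ι κ ℝ} {l : ℝ}
    (h : IsBalanced W.row l) (hW : span ℝ (Set.range W.row) = ⊤) (t : ι → ℝ) :
    ∃ g : κ → ι, Function.Injective g ∧ (W.submatrix g id).det ≠ 0 ∧
      l * ∑ p, t p ≤ ∑ k, t (g k) := by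
  obtain ⟨B, hli, hspan, hsum⟩ := h.exists_linearIndepOn_mul_sum_le t
  have hcard : Fintype.card κ = Fintype.card B := by
    have := finrank_span_eq_card hli
    rw [← Set.image_eq_range, hspan, hW, finrank_top, finrank_fintype_fun_eq_card] at this
    simpa using this
  let e : κ ≃ B := Fintype.equivOfCardEq hcard
  refine ⟨fun k => e k, Subtype.val_injective.comp e.injective, ?_, ?_⟩
  · have hrows : LinearIndependent ℝ (W.submatrix (fun k => (e k : ι)) id).row :=
      hli.comp e e.injective
    exact ((isUnit_iff_isUnit_det _).1 (linearIndependent_rows_iff_isUnit.1 hrows)).ne_zero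
  · rwa [e.sum_comp fun p : B => t p, Finset.sum_coe_sort B t]

variable [DecidableEq ι]

theorem det_submatrix_scaleRows_sq (W : Matrix ι κ ℝ) (t : ι → ℝ) (g : κ → ι) :
    ((scaleRows W t).submatrix g id).det ^ 2 =
      Real.exp (∑ k, t (g k)) * (W.submatrix g id).det ^ 2 := by
  have hsub : (scaleRows W t).submatrix g id =
      diagonal (fun k => Real.exp (t (g k) / 2)) * W.submatrix g id := by
    ext k j
    simp [scaleRows_apply, diagonal_mul]
  rw [hsub, det_mul, det_diagonal, ← Real.exp_sum, mul_pow, ← Real.exp_nat_mul, ← Finset.sum_div]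
  congr 2
  push_cast
  ring

/-- The potential whose critical points are the rescalings with all leverages equal to `l`. -/
def leveragePotential (W : Matrix ι κ ℝ) (l : ℝ) (t : ι → ℝ) : ℝ :=
  Real.log ((scaleRows W t)ᵀ * scaleRows W t).det - l * ∑ p, t p

theorem IsBalanced.det_transpose_mul_self_pos {W : Matrix ι κ ℝ} {l : ℝ} (h : IsBalanced W.row l)
    (hW : span ℝ (Set.range W.row) = ⊤) (t : ι → ℝ) :
    0 < ((scaleRows W t)ᵀ * scaleRows W t).det := by
  obtain ⟨g, hg, hdet, -⟩ := h.exists_injective_det_ne_zero hW t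
  refine lt_of_lt_of_le ?_ (det_submatrix_sq_le_det_transpose_mul_self (scaleRows W t) hg)
  rw [det_submatrix_scaleRows_sq]
  positivity

theorem IsBalanced.bddBelow_leveragePotential {W : Matrix ι κ ℝ} {l : ℝ}
    (h : IsBalanced W.row l) (hW : span ℝ (Set.range W.row) = ⊤) :
    BddBelow (Set.range (leveragePotential W l)) := by
  obtain ⟨m, hm⟩ := (Set.finite_range fun g : κ → ι =>
    Real.log ((W.submatrix g id).det ^ 2)).bddBelow
  refine ⟨m, ?_⟩
  rintro _ ⟨t, rfl⟩
  obtain ⟨g, hg, hdet, hsum⟩ := h.exists_injective_det_ne_zero hW t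
  have hle := det_submatrix_sq_le_det_transpose_mul_self (scaleRows W t) hg
  rw [det_submatrix_scaleRows_sq] at hle
  have hlog := Real.log_le_log (by positivity) hle
  rw [Real.log_mul (Real.exp_ne_zero _) (by positivity), Real.log_exp] at hlog
  have := hm ⟨g, rfl⟩
  simp only at this
  unfold leveragePotential
  linarith

theorem hasLineDerivAt_leveragePotential {W : Matrix ι κ ℝ} {t : ι → ℝ}
    (hdet : ((scaleRows W t)ᵀ * scaleRows W t).det ≠ 0) (l : ℝ) (p : ι) :
    HasLineDerivAt ℝ (leveragePotential W l) (hatMatrix (scaleRows W t) p p - l) t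
      (Pi.single p 1) := by
  set d := ((scaleRows W t)ᵀ * scaleRows W t).det
  set a := hatMatrix (scaleRows W t) p p
  have hlog : HasDerivAt (fun h : ℝ => Real.log (d * (1 + (Real.exp h - 1) * a))) a 0 := by
    have := (((((Real.hasDerivAt_exp 0).sub_const 1).mul_const a).const_add 1).const_mul d).log
      (by simpa using hdet)
    simpa [hdet] using this
  have hlin : HasDerivAt (fun h : ℝ => l * (∑ q, t q + h)) l 0 := by
    simpa using ((hasDerivAt_id (0 : ℝ)).const_add (∑ q, t q)).const_mul l
  refine (hlog.sub hlin).congr_of_eventuallyEq (.of_forall fun h => ?_)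
  simp [leveragePotential, scaleRows_transpose_mul_self_add_single,
    det_transpose_mul_self_add_smul_vecMulVec hdet, Finset.sum_add_distrib,
    ← Finset.mul_sum, d, a]

theorem IsBalanced.exists_scaleRows_abs_hatMatrix_sub_le {W : Matrix ι κ ℝ} {l ε : ℝ}
    (h : IsBalanced W.row l) (hW : span ℝ (Set.range W.row) = ⊤) (hε : 0 < ε) :
    ∃ t : ι → ℝ, ∀ p, |hatMatrix (scaleRows W t) p p - l| ≤ ε := by
  have hcont : Continuous (leveragePotential W l) := by
    refine Continuous.sub (Continuous.log ?_ fun t => (h.det_transpose_mul_self_pos hW t).ne')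
      (by fun_prop)
    unfold scaleRows
    fun_prop
  obtain ⟨t, ht⟩ :=
    exists_forall_hasLineDerivAt_abs_le hcont (h.bddBelow_leveragePotential hW) hε
  refine ⟨t, fun p => (ht _ _ (hasLineDerivAt_leveragePotential
    (h.det_transpose_mul_self_pos hW t).ne' l p)).trans_eq ?_⟩
  simp [Pi.norm_single]

end Scaling

theorem IsBalanced.exists_isStarProjection {ι E : Type*} [Fintype ι] [AddCommGroup E] [Module ℝ E]
    {v : ι → E} {l ε : ℝ} (h : IsBalanced v l) (hε : 0 < ε) :
    ∃ A : Matrix ι ι ℝ, IsStarProjection A ∧ (∀ p, |A p p - l| ≤ ε) ∧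
      ∀ Q : Finset ι, (A.submatrix ((↑) : Q → ι) ((↑) : Q → ι)).rank ≤
        finrank ℝ (span ℝ (v '' Q)) := by
  classical
  let S := span ℝ (Set.range v)
  have : FiniteDimensional ℝ S := .span_of_finite ℝ (Set.finite_range v)
  let b := Module.finBasis ℝ S
  let u : ι → S := fun p => ⟨v p, subset_span (Set.mem_range_self p)⟩
  let W : Matrix ι (Fin (finrank ℝ S)) ℝ := Matrix.of (b.equivFun ∘ u)
  have hrank (Q : Set ι) : finrank ℝ (span ℝ (W.row '' Q)) = finrank ℝ (span ℝ (v '' Q)) :=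
    (finrank_span_image_comp (g := b.equivFun.toLinearMap) b.equivFun.injective u Q).trans
      (finrank_span_image_comp S.subtype_injective u Q).symm
  have hrank_univ : finrank ℝ (span ℝ (Set.range W.row)) = finrank ℝ S := by
    rw [← Set.image_univ, hrank, Set.image_univ]
  have hW : IsBalanced W.row l :=
    ⟨by rw [hrank_univ]; exact h.mul_card_eq, fun Q => by rw [hrank]; exact h.mul_card_le Q⟩
  have hspan : span ℝ (Set.range W.row) = ⊤ :=
    Submodule.eq_top_of_finrank_eq (by simp [hrank_univ])
  obtain ⟨t, ht⟩ := hW.exists_scaleRows_abs_hatMatrix_sub_le hspan hε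
  refine ⟨hatMatrix (scaleRows W t),
    hatMatrix_isStarProjection (hW.det_transpose_mul_self_pos hspan t).ne', ht, fun Q => ?_⟩
  have : FiniteDimensional ℝ (span ℝ (W.row '' Q)) := .span_of_finite ℝ (Q.finite_toSet.image _)
  calc _ ≤ finrank ℝ (span ℝ ((scaleRows W t).row '' Q)) := rank_submatrix_hatMatrix_le _ Q
    _ ≤ finrank ℝ (span ℝ (W.row '' Q)) := Submodule.finrank_mono (span_row_scaleRows_le W t Q)
    _ = finrank ℝ (span ℝ (v '' Q)) := hrank Q

theorem trace_sq_le_rank_mul_sum_sq {m : Type*} [Fintype m] {B : Matrix m m ℝ}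
    (hB : B.IsHermitian) : B.trace ^ 2 ≤ B.rank * ∑ i, ∑ j, B i j ^ 2 := by
  classical
  let U : Matrix m m ℝ := hB.eigenvectorUnitary
  let Λ : Matrix m m ℝ := diagonal hB.eigenvalues
  have hUU : star U * U = 1 := Unitary.coe_star_mul_self hB.eigenvectorUnitary
  have hspec : B = U * Λ * star U := hB.spectral_theorem
  have sum_sq : ∑ i, ∑ j, B i j ^ 2 = ∑ i, hB.eigenvalues i ^ 2 := calc
    ∑ i, ∑ j, B i j ^ 2 = (B * B).trace := by
      simp only [trace, Matrix.diag, mul_apply, sq]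
      exact sum_congr rfl fun i _ => sum_congr rfl fun j _ => congrArg (B i j * ·) (hB.apply j i)
    _ = (U * (Λ * (star U * U) * Λ) * star U).trace := by
      rw [hspec]
      simp only [Matrix.mul_assoc]
    _ = ∑ i, hB.eigenvalues i ^ 2 := by
      rw [trace_mul_comm, ← Matrix.mul_assoc, hUU, Matrix.one_mul, Matrix.mul_one,
        diagonal_mul_diagonal, trace_diagonal]
      simp only [sq]
  have trace_eq : B.trace = ∑ i with hB.eigenvalues i ≠ 0, hB.eigenvalues i := by
    rw [sum_filter_ne_zero]
    exact hB.trace_eq_sum_eigenvalues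
  rw [trace_eq, sum_sq, hB.rank_eq_card_non_zero_eigs, Fintype.card_subtype]
  exact sq_sum_le_card_mul_sum_sq.trans (mul_le_mul_of_nonneg_left
    (sum_le_univ_sum_of_nonneg fun _ => sq_nonneg _) (Nat.cast_nonneg _))

section StarProjection

variable {ι : Type*} [Fintype ι] {A : Matrix ι ι ℝ}

theorem sum_mul_apply_of_isStarProjection (hA : IsStarProjection A) (p q : ι) :
    ∑ r, A r p * A r q = A p q := by
  conv_rhs => rw [← hA.isIdempotentElem.eq, mul_apply]
  exact sum_congr rfl fun r _ => by rw [← IsHermitian.apply hA.isSelfAdjoint p r]; rfl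

theorem sum_sq_apply_of_isStarProjection (hA : IsStarProjection A) (p : ι) :
    ∑ r, A r p ^ 2 = A p p := by
  simp only [sq, sum_mul_apply_of_isStarProjection hA]

theorem sq_apply_le_of_isStarProjection (hA : IsStarProjection A) (p q : ι) :
    A p q ^ 2 ≤ A p p * A q q := by
  simpa only [sum_mul_apply_of_isStarProjection hA, sum_sq_apply_of_isStarProjection hA] using
    sum_mul_sq_le_sq_mul_sq univ (fun r => A r p) (fun r => A r q)

end StarProjection

section PathEnergy

variable {ι : Type*}

theorem sq_mul_card_le_rank_mul_sum_sq {A : Matrix ι ι ℝ} (hA : A.IsHermitian) {Q : Finset ι}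
    {l : ℝ} (hl : 0 < l) (hd : ∀ p, l / 2 ≤ A p p) {h : ℕ}
    (hh : (A.submatrix ((↑) : Q → ι) ((↑) : Q → ι)).rank ≤ h) :
    (l * #Q / 2) ^ 2 ≤ h * ∑ q ∈ Q, ∑ p ∈ Q, A p q ^ 2 := by
  have key := trace_sq_le_rank_mul_sum_sq (hA.submatrix ((↑) : Q → ι))
  have htrace : (A.submatrix ((↑) : Q → ι) ((↑) : Q → ι)).trace = ∑ p ∈ Q, A p p :=
    sum_coe_sort Q fun p => A p p
  have hsum : ∑ i : Q, ∑ j : Q, A.submatrix ((↑) : Q → ι) ((↑) : Q → ι) i j ^ 2 =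
      ∑ q ∈ Q, ∑ p ∈ Q, A p q ^ 2 := by
    rw [sum_comm, ← sum_coe_sort Q]
    exact sum_congr rfl fun q _ => sum_coe_sort Q fun p => A p q ^ 2
  rw [htrace, hsum] at key
  have hle : l * #Q / 2 ≤ ∑ p ∈ Q, A p p := calc
    l * #Q / 2 = ∑ p ∈ Q, l / 2 := by rw [sum_const, nsmul_eq_mul]; ring
    _ ≤ _ := sum_le_sum fun p _ => hd p
  calc (l * #Q / 2) ^ 2 ≤ (∑ p ∈ Q, A p p) ^ 2 := by gcongr
    _ ≤ _ := key
    _ ≤ _ := by gcongr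

variable [DecidableEq ι]

/-- The total weight of the paths `p – q – r` on three distinct vertices of `Q`, where the edge
`p – q` has weight `(A p q) ^ 2`. -/
def pathEnergy (A : Matrix ι ι ℝ) (Q : Finset ι) : ℝ :=
  ∑ q ∈ Q, ∑ z ∈ (Q.erase q).offDiag, A z.1 q ^ 2 * A z.2 q ^ 2

theorem pathEnergy_nonneg (A : Matrix ι ι ℝ) (Q : Finset ι) : 0 ≤ pathEnergy A Q :=
  sum_nonneg fun _ _ => sum_nonneg fun _ _ => by positivity

theorem sum_sq_le_sum_offDiag_erase {Q : Finset ι} {q : ι} (hq : q ∈ Q) {f : ι → ℝ} {b : ℝ}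
    (hf : ∀ p ∈ Q, 0 ≤ f p) (hb : ∀ p ∈ Q, f p ≤ b) :
    (∑ p ∈ Q, f p) ^ 2 ≤ ∑ z ∈ (Q.erase q).offDiag, f z.1 * f z.2 + 3 * b * ∑ p ∈ Q, f p := by
  set R := Q.erase q
  have hRQ : R ⊆ Q := erase_subset q Q
  have sum_Q : ∑ p ∈ Q, f p = f q + ∑ p ∈ R, f p := (add_sum_erase _ _ hq).symm
  have sq_R : (∑ p ∈ R, f p) ^ 2 = ∑ p ∈ R, f p * f p + ∑ z ∈ R.offDiag, f z.1 * f z.2 := by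
    rw [sq, sum_mul_sum, ← sum_product', ← diag_union_offDiag,
      sum_union (disjoint_diag_offDiag R), sum_diag]
  have sum_R_nonneg : 0 ≤ ∑ p ∈ R, f p := sum_nonneg fun p hp => hf p (hRQ hp)
  have diag_le : ∑ p ∈ R, f p * f p ≤ b * ∑ p ∈ R, f p := by
    rw [mul_sum]
    exact sum_le_sum fun p hp => mul_le_mul_of_nonneg_right (hb p (hRQ hp)) (hf p (hRQ hp))
  have := hf q hq
  have := hb q hq
  rw [sum_Q]
  nlinarith

theorem pow_four_mul_card_pow_three_le_pathEnergy {A : Matrix ι ι ℝ} (hA : A.IsHermitian)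
    {Q : Finset ι} {l : ℝ} (hl : 0 < l) (hd : ∀ p, l / 2 ≤ A p p)
    (hsq : ∀ p q, A p q ^ 2 ≤ 4 * l ^ 2) {h : ℕ}
    (hh : (A.submatrix ((↑) : Q → ι) ((↑) : Q → ι)).rank ≤ h) (hQ : 96 * h ≤ #Q) :
    l ^ 4 * #Q ^ 3 ≤ 32 * h ^ 2 * pathEnergy A Q := by
  rcases Q.eq_empty_or_nonempty with rfl | hne
  · simp [pathEnergy]
  have hx : 0 < (#Q : ℝ) := by exact_mod_cast hne.card_pos
  have hxh : 96 * (h : ℝ) ≤ #Q := by exact_mod_cast hQ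
  set x : ℝ := (#Q : ℝ)
  set E := ∑ q ∈ Q, ∑ p ∈ Q, A p q ^ 2
  have hE : 0 ≤ E := sum_nonneg fun _ _ => sum_nonneg fun _ _ => sq_nonneg _
  have energy_lower : l ^ 2 * x ^ 2 ≤ 4 * (h * E) := by
    have := sq_mul_card_le_rank_mul_sum_sq hA hl hd hh
    linarith
  have energy_sq_le : E ^ 2 ≤ x * (pathEnergy A Q + 12 * l ^ 2 * E) := calc
    E ^ 2 ≤ x * ∑ q ∈ Q, (∑ p ∈ Q, A p q ^ 2) ^ 2 := sq_sum_le_card_mul_sum_sq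
    _ ≤ x * ∑ q ∈ Q, (∑ z ∈ (Q.erase q).offDiag, A z.1 q ^ 2 * A z.2 q ^ 2 +
          3 * (4 * l ^ 2) * ∑ p ∈ Q, A p q ^ 2) := by
      gcongr with q hq
      exact sum_sq_le_sum_offDiag_erase hq (fun p _ => sq_nonneg _) fun p _ => hsq p q
    _ = x * (pathEnergy A Q + 12 * l ^ 2 * E) := by
      rw [sum_add_distrib, ← mul_sum, pathEnergy]
      ring
  have degenerate_le : 24 * l ^ 2 * x ≤ E := by
    have : x * (24 * l ^ 2 * x) ≤ x * E := by nlinarith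
    exact le_of_mul_le_mul_left this hx
  have half_le : E ^ 2 ≤ 2 * (x * pathEnergy A Q) := by nlinarith [degenerate_le]
  have : x * (l ^ 4 * x ^ 3) ≤ x * (32 * h ^ 2 * pathEnergy A Q) := calc
    x * (l ^ 4 * x ^ 3) = (l ^ 2 * x ^ 2) ^ 2 := by ring
    _ ≤ (4 * (h * E)) ^ 2 := by gcongr
    _ = 16 * h ^ 2 * E ^ 2 := by ring
    _ ≤ 16 * h ^ 2 * (2 * (x * pathEnergy A Q)) := by gcongr
    _ = x * (32 * h ^ 2 * pathEnergy A Q) := by ring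
  exact le_of_mul_le_mul_left this hx

theorem sum_pathEnergy_le {σ : Type*} [Fintype ι] {A : Matrix ι ι ℝ}
    (hA : IsStarProjection A) {T : Finset σ} {Q : σ → Finset ι} {M : ℕ}
    (hM : ∀ t : Finset ι, #t = 3 → #{s ∈ T | t ⊆ Q s} ≤ M) :
    ∑ s ∈ T, pathEnergy A (Q s) ≤ M * ∑ q, A q q ^ 2 := by
  have card_le {q : ι} {z : ι × ι} (hz : z ∈ (univ.erase q).offDiag) :
      #{s ∈ T | q ∈ Q s ∧ z ∈ ((Q s).erase q).offDiag} ≤ M := by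
    simp only [mem_offDiag, mem_erase, mem_univ, and_true] at hz
    have hz3 : #{q, z.1, z.2} = 3 := card_eq_three.2
      ⟨q, z.1, z.2, hz.1.symm, hz.2.1.symm, hz.2.2, rfl⟩
    refine (card_le_card ?_).trans (hM _ hz3)
    intro s
    simp only [mem_filter, mem_offDiag, mem_erase, insert_subset_iff, singleton_subset_iff]
    tauto
  calc ∑ s ∈ T, pathEnergy A (Q s)
      = ∑ q, ∑ z ∈ (univ.erase q).offDiag, ∑ s ∈ T with q ∈ Q s ∧ z ∈ ((Q s).erase q).offDiag,
          A z.1 q ^ 2 * A z.2 q ^ 2 := by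
        unfold pathEnergy
        rw [sum_comm' (t' := univ) (s' := fun q => {s ∈ T | q ∈ Q s}) (by simp [and_comm])]
        refine sum_congr rfl fun q _ => sum_comm' ?_
        simp only [mem_filter, mem_offDiag, mem_erase, mem_univ]
        tauto
    _ ≤ ∑ q, ∑ z ∈ (univ.erase q).offDiag, M * (A z.1 q ^ 2 * A z.2 q ^ 2) := by
        gcongr with q _ z hz
        rw [sum_const, nsmul_eq_mul]
        gcongr
        exact card_le hz
    _ ≤ ∑ q, ∑ z : ι × ι, M * (A z.1 q ^ 2 * A z.2 q ^ 2) := by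
        gcongr with q
        exact subset_univ _
    _ = M * ∑ q, A q q ^ 2 := by
        simp only [← mul_sum, Fintype.sum_prod_type, ← sum_mul,
          sum_sq_apply_of_isStarProjection hA, ← sq]

/-- `W` is the path energy of the orthogonal projection obtained by rescaling. -/
theorem IsBalanced.exists_pathEnergy_bound [Fintype ι] {E : Type*} [AddCommGroup E] [Module ℝ E]
    {v : ι → E} {l : ℝ} (h : IsBalanced v l) (hl : 0 < l) {σ : Type*} {T : Finset σ}
    {Q : σ → Finset ι} {M : ℕ} (hM : ∀ t : Finset ι, #t = 3 → #{s ∈ T | t ⊆ Q s} ≤ M) :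
    ∃ W : Finset ι → ℝ, (∀ R, 0 ≤ W R) ∧
      (∀ R : Finset ι, 96 * finrank ℝ (span ℝ (v '' R)) ≤ #R →
        l ^ 4 * #R ^ 3 ≤ 32 * (finrank ℝ (span ℝ (v '' R)) : ℝ) ^ 2 * W R) ∧
      ∑ s ∈ T, W (Q s) ≤ 4 * M * l ^ 2 * Fintype.card ι := by
  obtain ⟨A, hA, hd, hrank⟩ := h.exists_isStarProjection (half_pos hl)
  have diag_lower (p : ι) : l / 2 ≤ A p p := by linarith [(abs_le.1 (hd p)).1]
  have diag_upper (p : ι) : A p p ≤ 2 * l := by linarith [(abs_le.1 (hd p)).2]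
  have apply_sq_le (p q : ι) : A p q ^ 2 ≤ 4 * l ^ 2 := by
    nlinarith [sq_apply_le_of_isStarProjection hA p q, diag_lower p, diag_lower q, diag_upper p,
      diag_upper q]
  refine ⟨pathEnergy A, pathEnergy_nonneg A, fun R hR =>
    pow_four_mul_card_pow_three_le_pathEnergy hA.isSelfAdjoint hl diag_lower apply_sq_le
      (hrank R) hR, ?_⟩
  calc ∑ s ∈ T, pathEnergy A (Q s) ≤ M * ∑ q, A q q ^ 2 := sum_pathEnergy_le hA hM
    _ ≤ M * ∑ _q : ι, 4 * l ^ 2 := by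
      gcongr with q
      exact apply_sq_le q q
    _ = 4 * M * l ^ 2 * Fintype.card ι := by
      rw [sum_const, nsmul_eq_mul, card_univ]
      ring

end PathEnergy

section Hilbert

variable {ι σ K : Type*}

/-- The Veronese map: the values at `x` of all monomials of degree `D`. -/
def veronese [CommMonoid K] (D : ℕ) (x : σ → K) : Sym σ D → K :=
  fun s => ((s : Multiset σ).map x).prod

theorem veronese_cons [CommMonoid K] {D : ℕ} (x : σ → K) (i : σ) (s : Sym σ D) :
    veronese (D + 1) x (i ::ₛ s) = x i * veronese D x s := by
  simp only [veronese, Sym.coe_cons, Multiset.map_cons, Multiset.prod_cons]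

variable [Field K]

theorem veronese_ne_zero {x : σ → K} (hx : x ≠ 0) (D : ℕ) : veronese D x ≠ 0 := by
  obtain ⟨i, hi⟩ := Function.ne_iff.1 hx
  refine Function.ne_iff.2 ⟨Sym.replicate D i, ?_⟩
  simp only [veronese, Sym.coe_replicate, Multiset.map_replicate, Multiset.prod_replicate]
  exact pow_ne_zero D hi

/-- The Hilbert function of the points `x i` with `i ∈ Q`: the number of conditions that they impose
on forms of degree `D`. -/
def hilbert (D : ℕ) (x : ι → σ → K) (Q : Finset ι) : ℕ :=
  finrank K (span K ((fun i => veronese D (x i)) '' Q))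

section Contract

variable [Fintype σ]

/-- Contraction with the linear form `a`. It is dual to multiplication of forms of degree `D`
by `a`. -/
def contract (a : σ → K) (D : ℕ) : (Sym σ (D + 1) → K) →ₗ[K] (Sym σ D → K) :=
  LinearMap.pi fun s => ∑ i, a i • LinearMap.proj (i ::ₛ s)

theorem contract_veronese (a : σ → K) (D : ℕ) (x : σ → K) :
    contract a D (veronese (D + 1) x) = (a ⬝ᵥ x) • veronese D x := by
  ext s
  simp [contract, veronese_cons, dotProduct, sum_mul, mul_assoc]

theorem hilbert_filter_add_hilbert_filter_le [DecidableEq K] (D : ℕ) (x : ι → σ → K)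
    (Q : Finset ι) (a : σ → K) :
    hilbert (D + 1) x {i ∈ Q | a ⬝ᵥ x i = 0} + hilbert D x {i ∈ Q | a ⬝ᵥ x i ≠ 0} ≤
      hilbert (D + 1) x Q := by
  let V := span K ((fun i => veronese (D + 1) (x i)) '' Q)
  have ker_ge : hilbert (D + 1) x {i ∈ Q | a ⬝ᵥ x i = 0} ≤
      finrank K ((contract a D).domRestrict V).ker := by
    have hle : span K ((fun i => veronese (D + 1) (x i)) '' ({i ∈ Q | a ⬝ᵥ x i = 0} : Finset ι)) ≤
        V := span_mono (Set.image_mono (filter_subset _ _))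
    rw [hilbert, ← (comapSubtypeEquivOfLe hle).finrank_eq]
    refine finrank_mono fun y hy => ?_
    rw [LinearMap.mem_ker, LinearMap.domRestrict_apply, ← LinearMap.mem_ker]
    refine span_le.2 ?_ (mem_comap.1 hy)
    rintro _ ⟨i, hi, rfl⟩
    simp [contract_veronese, (mem_filter.1 (mem_coe.1 hi)).2]
  have range_ge : hilbert D x {i ∈ Q | a ⬝ᵥ x i ≠ 0} ≤
      finrank K ((contract a D).domRestrict V).range := by
    refine finrank_mono (span_le.2 ?_)
    rintro _ ⟨i, hi, rfl⟩
    obtain ⟨hiQ, hi0⟩ := mem_filter.1 (mem_coe.1 hi)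
    rw [LinearMap.range_domRestrict]
    refine ⟨(a ⬝ᵥ x i)⁻¹ • veronese (D + 1) (x i), smul_mem _ _ (subset_span ⟨i, hiQ, rfl⟩), ?_⟩
    rw [map_smul, contract_veronese, inv_smul_smul₀ hi0]
  have := ((contract a D).domRestrict V).finrank_range_add_finrank_ker
  change _ = hilbert (D + 1) x Q at this
  omega

end Contract

/-- The monomial `s` as a function on the points of `Q`. -/
def monomialOn (x : ι → σ → K) (Q : Finset ι) {D : ℕ} (s : Sym σ D) : Q → K :=
  fun i => veronese D (x i) s

theorem hilbert_eq_finrank_span_monomialOn [Finite σ] (D : ℕ) (x : ι → σ → K) (Q : Finset ι) :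
    hilbert D x Q = finrank K (span K (Set.range (monomialOn x Q (D := D)))) := by
  have := Fintype.ofFinite σ
  classical
  let A : Matrix Q (Sym σ D) K := Matrix.of fun i => veronese D (x i)
  calc hilbert D x Q = finrank K (span K (Set.range A.row)) := by
        rw [hilbert, Set.image_eq_range]
        rfl
    _ = finrank K (span K (Set.range A.col)) := by
        rw [← rank_eq_finrank_span_row, rank_eq_finrank_span_cols]

variable [LinearOrder σ]

/-- The exponent vector of a monomial, with the lexicographic order. -/
def lexExponent {D : ℕ} (s : Sym σ D) : Lex (σ → ℕ) :=
  toLex fun i => (s : Multiset σ).count i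

theorem lexExponent_injective (D : ℕ) : Function.Injective (lexExponent (σ := σ) (D := D)) :=
  fun _ _ h => Sym.coe_injective (Multiset.ext.2 (congrFun h))

theorem lexExponent_cons {D : ℕ} (i : σ) (s : Sym σ D) :
    lexExponent (i ::ₛ s) = lexExponent s + toLex (Pi.single i 1) := by
  have count_cons (j : σ) : ((i ::ₛ s : Sym σ (D + 1)) : Multiset σ).count j =
      (s : Multiset σ).count j + (Pi.single i 1 : σ → ℕ) j := by
    rw [Sym.coe_cons, Multiset.count_cons, Pi.single_apply]
  exact congrArg toLex (funext count_cons)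

variable [Fintype σ]

/-- The monomials of degree `D` that are not congruent, modulo forms vanishing on `Q`, to a
combination of smaller ones. -/
def standardMonomials (D : ℕ) (x : ι → σ → K) (Q : Finset ι) : Finset (Sym σ D) :=
  freshIndices K (monomialOn x Q) lexExponent univ

theorem card_standardMonomials (D : ℕ) (x : ι → σ → K) (Q : Finset ι) :
    #(standardMonomials D x Q) = hilbert D x Q := by
  rw [standardMonomials, card_freshIndices (lexExponent_injective D), coe_univ, Set.image_univ,
    hilbert_eq_finrank_span_monomialOn]

theorem mem_standardMonomials_of_cons_mem {D : ℕ} {x : ι → σ → K} {Q : Finset ι} {i : σ}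
    {s : Sym σ D} (h : i ::ₛ s ∈ standardMonomials (D + 1) x Q) :
    s ∈ standardMonomials D x Q := by
  simp only [standardMonomials, mem_freshIndices, mem_univ, true_and] at h ⊢
  refine fun hs => h ?_
  let mul : (Q → K) →ₗ[K] (Q → K) := LinearMap.mulLeft K fun p => x p i
  have mul_monomialOn (s : Sym σ D) : mul (monomialOn x Q s) = monomialOn x Q (i ::ₛ s) :=
    funext fun p => (veronese_cons (x p) i s).symm
  have := mem_map_of_mem (f := mul) hs
  rw [map_span, mul_monomialOn, ← Set.image_comp] at this
  refine span_mono ?_ this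
  rintro _ ⟨s', hs', rfl⟩
  refine ⟨i ::ₛ s', ?_, (mul_monomialOn s').symm⟩
  simpa only [lexExponent_cons, Set.mem_ofPred_eq] using add_lt_add_left hs' _

theorem sum_count_eq {D : ℕ} (s : Sym σ D) : ∑ i, (s : Multiset σ).count i = D := by
  rw [Multiset.sum_count_eq_card fun i _ => mem_univ i, Sym.card_coe]

/-- Macaulay's growth bound: every monomial of degree `D + 1` is obtained from those of degree `D`
by multiplying by one of its variables; count with multiplicity. -/
theorem succ_mul_hilbert_succ_le (D : ℕ) (x : ι → σ → K) (Q : Finset ι) :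
    (D + 1) * hilbert (D + 1) x Q ≤ (D + Fintype.card σ) * hilbert D x Q := by
  have sum_count_le (i : σ) : ∑ s ∈ standardMonomials (D + 1) x Q, (s : Multiset σ).count i ≤
      ∑ s ∈ standardMonomials D x Q, ((s : Multiset σ).count i + 1) := by
    rw [← sum_filter_ne_zero]
    calc _ ≤ ∑ s ∈ (standardMonomials D x Q).image (i ::ₛ ·), (s : Multiset σ).count i := by
          refine sum_le_sum_of_subset fun s hs => ?_
          obtain ⟨hs, hi⟩ := mem_filter.1 hs
          obtain ⟨s, rfl⟩ := Sym.exists_cons_of_mem (Multiset.count_ne_zero.1 hi)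
          exact mem_image_of_mem _ (mem_standardMonomials_of_cons_mem hs)
      _ = ∑ s ∈ standardMonomials D x Q, ((s : Multiset σ).count i + 1) := by
          rw [sum_image fun s _ s' _ h => (Sym.cons_inj_right _ _ _).1 h]
          simp only [Sym.coe_cons, Multiset.count_cons_self]
  calc (D + 1) * hilbert (D + 1) x Q
      = ∑ s ∈ standardMonomials (D + 1) x Q, ∑ i, (s : Multiset σ).count i := by
        simp only [sum_count_eq, sum_const, card_standardMonomials, smul_eq_mul, mul_comm]
    _ = ∑ i, ∑ s ∈ standardMonomials (D + 1) x Q, (s : Multiset σ).count i := sum_comm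
    _ ≤ ∑ i, ∑ s ∈ standardMonomials D x Q, ((s : Multiset σ).count i + 1) :=
      sum_le_sum fun i _ => sum_count_le i
    _ = ∑ s ∈ standardMonomials D x Q, ∑ i, ((s : Multiset σ).count i + 1) := sum_comm
    _ = (D + Fintype.card σ) * hilbert D x Q := by
        simp only [sum_add_distrib, sum_count_eq, sum_const, card_standardMonomials, card_univ,
          smul_eq_mul, mul_comm, mul_one, add_mul]

section Quadric

variable {n D : ℕ} {x : ι → Fin (n + 1) → K} {Q : Finset ι} {c : Fin n → K}

theorem zero_cons_zero_cons_notMem_standardMonomials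
    (hx : ∀ i ∈ Q, x i 0 ^ 2 = ∑ j, c j * x i j.succ ^ 2) (s : Sym (Fin (n + 1)) D) :
    0 ::ₛ 0 ::ₛ s ∉ standardMonomials (D + 2) x Q := by
  have lex_lt (j : Fin n) : lexExponent (j.succ ::ₛ j.succ ::ₛ s) <
      lexExponent (0 ::ₛ 0 ::ₛ s) := by
    have hlt : toLex (Pi.single j.succ 1 : Fin (n + 1) → ℕ) < toLex (Pi.single 0 1) :=
      ⟨0, fun k hk => absurd hk (Fin.not_lt_zero k), by simp⟩
    simp only [lexExponent_cons]
    exact add_lt_add (add_lt_add_right hlt _) hlt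
  have reduce : monomialOn x Q (0 ::ₛ 0 ::ₛ s) =
      ∑ j, c j • monomialOn x Q (j.succ ::ₛ j.succ ::ₛ s) := by
    ext p
    simp only [monomialOn, veronese_cons, Finset.sum_apply, Pi.smul_apply, smul_eq_mul,
      ← mul_assoc]
    rw [← sq, hx p p.2, sum_mul]
    exact sum_congr rfl fun j _ => by ring
  rw [standardMonomials, mem_freshIndices, not_and_not_right, reduce]
  exact fun _ => sum_mem fun j _ => smul_mem _ _ (subset_span ⟨_, ⟨mem_univ _, lex_lt j⟩, rfl⟩)

theorem count_zero_le_one_of_mem_standardMonomials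
    (hx : ∀ i ∈ Q, x i 0 ^ 2 = ∑ j, c j * x i j.succ ^ 2) {s : Sym (Fin (n + 1)) D}
    (hs : s ∈ standardMonomials D x Q) : (s : Multiset (Fin (n + 1))).count 0 ≤ 1 := by
  by_contra! hcount
  obtain ⟨t, ht⟩ := Multiset.le_iff_exists_add.1 (Multiset.le_count_iff_replicate_le.1 hcount)
  have hcard : D = Multiset.card t + 2 := by
    rw [← s.card_coe, ht, Multiset.card_add, Multiset.card_replicate, add_comm]
  subst hcard
  have : s = 0 ::ₛ 0 ::ₛ Sym.mk t rfl :=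
    Sym.coe_injective <| by
      rw [ht, Sym.coe_cons, Sym.coe_cons, Multiset.replicate_succ, Multiset.replicate_one,
        Multiset.cons_add, Multiset.singleton_add, Sym.coe_mk]
  exact zero_cons_zero_cons_notMem_standardMonomials hx _ (this ▸ hs)

end Quadric

theorem hilbert_le_of_quadric {n : ℕ} {x : ι → Fin (n + 2) → K} {Q : Finset ι}
    {c : Fin (n + 1) → K} (hx : ∀ i ∈ Q, x i 0 ^ 2 = ∑ j, c j * x i j.succ ^ 2) (D : ℕ) :
    hilbert D x Q ≤ 2 * (D + 1) ^ n := by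
  let exponents (s : Sym (Fin (n + 2)) D) : ℕ × (Fin n → ℕ) :=
    ((s : Multiset (Fin (n + 2))).count 0,
      fun j => (s : Multiset (Fin (n + 2))).count j.castSucc.succ)
  have maps_to : ∀ s ∈ standardMonomials D x Q,
      exponents s ∈ range 2 ×ˢ Fintype.piFinset fun _ => range (D + 1) := by
    intro s hs
    have count_le (j) : (s : Multiset (Fin (n + 2))).count j ≤ D :=
      (Multiset.count_le_card _ _).trans_eq s.card_coe
    have := count_zero_le_one_of_mem_standardMonomials hx hs
    simpa [exponents, Nat.lt_succ_iff, this] using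
      fun j : Fin n => count_le j.castSucc.succ
  have exponents_injective : Function.Injective exponents := by
    intro s s' h
    obtain ⟨h0, h1⟩ := Prod.mk.inj h
    have hsum := (sum_count_eq s).trans (sum_count_eq s').symm
    simp only [Fin.sum_univ_succ (n := n + 1), Fin.sum_univ_castSucc, h0, congrFun h1] at hsum
    refine Sym.coe_injective (Multiset.ext.2 fun j => ?_)
    induction j using Fin.cases with
    | zero => exact h0
    | succ j =>
      induction j using Fin.lastCases with
      | last => omega
      | cast j => exact congrFun h1 j
  rw [← card_standardMonomials]
  calc #(standardMonomials D x Q)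
      ≤ #(range 2 ×ˢ Fintype.piFinset fun _ : Fin n => range (D + 1)) :=
        card_le_card_of_injOn exponents maps_to exponents_injective.injOn
    _ = 2 * (D + 1) ^ n := by simp

end Hilbert

section Peeling

variable {ι σ τ : Type*}

theorem hilbert_mono [Finite σ] {K : Type*} [Field K] (D : ℕ) (x : ι → σ → K) {Q P : Finset ι}
    (h : Q ⊆ P) : hilbert D x Q ≤ hilbert D x P := by
  have : FiniteDimensional K (span K ((fun i => veronese D (x i)) '' P)) :=
    .span_of_finite K (P.finite_toSet.image _)
  exact finrank_mono (span_mono (Set.image_mono (by exact_mod_cast h)))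

section Balanced

variable [Fintype ι] [Fintype σ] {D : ℕ} {x : ι → σ → ℝ} {l : ℝ}

theorem IsBalanced.mul_hilbert_filter_le (h : IsBalanced (fun i => veronese (D + 1) (x i)) l)
    (a : σ → ℝ) :
    ((D : ℝ) + 1) * hilbert (D + 1) x {i | a ⬝ᵥ x i = 0} ≤
      l * ((D + 1) * #{i | a ⬝ᵥ x i = 0} + Fintype.card σ * Fintype.card ι) := by
  have total : (hilbert (D + 1) x univ : ℝ) = l * Fintype.card ι := by
    rw [h.mul_card_eq, hilbert, coe_univ, Set.image_univ]
  have split : (hilbert (D + 1) x {i | a ⬝ᵥ x i = 0} : ℝ) + hilbert D x {i | a ⬝ᵥ x i ≠ 0} ≤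
      hilbert (D + 1) x univ := by
    exact_mod_cast hilbert_filter_add_hilbert_filter_le D x univ a
  have growth : ((D : ℝ) + 1) * hilbert (D + 1) x {i | a ⬝ᵥ x i ≠ 0} ≤
      (D + Fintype.card σ) * hilbert D x {i | a ⬝ᵥ x i ≠ 0} := by
    let := LinearOrder.lift' _ (Fintype.equivFin σ).injective
    exact_mod_cast succ_mul_hilbert_succ_le D x {i | a ⬝ᵥ x i ≠ 0}
  have balanced : l * #{i | a ⬝ᵥ x i ≠ 0} ≤ hilbert (D + 1) x {i | a ⬝ᵥ x i ≠ 0} :=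
    h.mul_card_le _
  have card_add : (#{i | a ⬝ᵥ x i = 0} : ℝ) + #{i | a ⬝ᵥ x i ≠ 0} = Fintype.card ι := by
    exact_mod_cast card_filter_add_card_filter_not (s := univ) fun i => a ⬝ᵥ x i = 0
  rw [total] at split
  have le_total : (hilbert D x {i | a ⬝ᵥ x i ≠ 0} : ℝ) ≤ l * Fintype.card ι := by linarith
  calc ((D : ℝ) + 1) * hilbert (D + 1) x {i | a ⬝ᵥ x i = 0}
      ≤ (D + 1) * (l * Fintype.card ι - hilbert D x {i | a ⬝ᵥ x i ≠ 0}) := by gcongr; linarith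
    _ = (D + 1) * (l * #{i | a ⬝ᵥ x i = 0}) + (D + 1) * (l * #{i | a ⬝ᵥ x i ≠ 0}) -
          (D + 1) * hilbert D x {i | a ⬝ᵥ x i ≠ 0} := by rw [← card_add]; ring
    _ ≤ (D + 1) * (l * #{i | a ⬝ᵥ x i = 0}) +
          Fintype.card σ * hilbert D x {i | a ⬝ᵥ x i ≠ 0} := by
        have := (mul_le_mul_of_nonneg_left balanced (by positivity : (0 : ℝ) ≤ D + 1)).trans growth
        linarith [(hilbert D x {i | a ⬝ᵥ x i ≠ 0}).cast_nonneg (α := ℝ)]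
    _ ≤ (D + 1) * (l * #{i | a ⬝ᵥ x i = 0}) + Fintype.card σ * (l * Fintype.card ι) := by gcongr
    _ = _ := by ring

end Balanced

/-- Here `x` and `h` are the cardinality and the rank of a hyperplane section of `q` points.
A section with at least `q / E` points has `h ≤ K * l * x`; the others have `h ≤ K * l * q / E`, and
are only worth bounding when they have more than `q * L` points. -/
theorem le_add_mul_of_mul_cube_le {K l q E L x h W : ℝ} (hK : 1 ≤ K) (hl : 0 < l)
    (hKl : 96 * K * l ≤ 1) (hE : 0 < E) (hL : 0 < L) (hx : 0 ≤ x) (hh : 0 ≤ h) (hW : 0 ≤ W)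
    (hq : 0 ≤ q) (hrank : E * h ≤ l * (E * x + (K - 1) * q))
    (hcube : 96 * h ≤ x → l ^ 4 * x ^ 3 ≤ 32 * h ^ 2 * W) :
    x ≤ q * (96 * K * l / E + L) + (1 + 1 / (E * L) ^ 2) * (32 * K ^ 2 * (W / l ^ 2)) := by
  set V := 32 * K ^ 2 * (W / l ^ 2) with hV
  have hV0 : 0 ≤ V := by positivity
  have rank_le (z : ℝ) (hxz : x ≤ z) (hqz : q ≤ E * z) : h ≤ K * l * z := by
    refine le_of_mul_le_mul_left (hrank.trans ?_) hE
    calc l * (E * x + (K - 1) * q) ≤ l * (E * z + (K - 1) * (E * z)) := by gcongr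
      _ = E * (K * l * z) := by ring
  have cube_le (z : ℝ) (hxz : x ≤ z) (hqz : q ≤ E * z) (hhx : 96 * h ≤ x) :
      x ^ 3 ≤ z ^ 2 * V := by
    refine le_of_mul_le_mul_left ((hcube hhx).trans ?_) (by positivity : 0 < l ^ 4)
    calc 32 * h ^ 2 * W ≤ 32 * (K * l * z) ^ 2 * W := by gcongr; exact rank_le z hxz hqz
      _ = l ^ 4 * (z ^ 2 * V) := by rw [hV]; field_simp
  suffices x ≤ q * (96 * K * l / E) ∨ x ≤ q * L ∨ x ≤ V ∨ x ≤ 1 / (E * L) ^ 2 * V by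
    have h1 : 0 ≤ q * (96 * K * l / E) := by positivity
    have h2 : 0 ≤ q * L := by positivity
    have h3 : 0 ≤ 1 / (E * L) ^ 2 * V := by positivity
    rw [mul_add, add_mul, one_mul]
    rcases this with h | h | h | h <;> linarith
  rcases le_or_gt q (E * x) with hqx | hqx
  · have hhx : 96 * h ≤ x := by
      linarith [rank_le x le_rfl hqx, mul_le_mul_of_nonneg_right hKl hx]
    rcases hx.eq_or_lt with rfl | hx
    · exact .inr (.inr (.inl hV0))
    · exact .inr (.inr (.inl (le_of_mul_le_mul_left
        ((cube_le x le_rfl hqx hhx).trans_eq' (by ring)) (pow_pos hx 2))))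
  have hxz : x ≤ q / E := by rw [le_div_iff₀ hE]; linarith
  have hqz : q ≤ E * (q / E) := (mul_div_cancel₀ q hE.ne').ge
  rcases lt_or_ge x (96 * h) with hhx | hhx
  · have := rank_le _ hxz hqz
    exact .inl (hhx.le.trans (by linear_combination 96 * this))
  rcases le_or_gt x (q * L) with hxL | hxL
  · exact .inr (.inl hxL)
  have hq : 0 < q := by
    have := mul_nonneg hE.le hx
    linarith
  refine .inr (.inr (.inr (le_of_mul_le_mul_left ?_ (by positivity : 0 < (q * L) ^ 2))))
  calc (q * L) ^ 2 * x ≤ x ^ 2 * x := by gcongr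
    _ = x ^ 3 := by ring
    _ ≤ (q / E) ^ 2 * V := cube_le _ hxz hqz hhx
    _ = (q * L) ^ 2 * (1 / (E * L) ^ 2 * V) := by field_simp

theorem IsBalanced.sum_card_filter_le [Fintype ι] [Fintype σ] {D : ℕ} {x : ι → σ → ℝ} {l : ℝ}
    (h : IsBalanced (fun i => veronese (D + 1) (x i)) l) (hl : 0 < l)
    (hKl : 96 * ((Fintype.card σ : ℝ) + 1) * l ≤ 1) {T : Finset τ} {a : τ → σ → ℝ} {M : ℕ}
    (hM : ∀ t : Finset ι, #t = 3 → #{s ∈ T | ∀ i ∈ t, a s ⬝ᵥ x i = 0} ≤ M)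
    {L : ℝ} (hL : 0 < L) :
    ∑ i, (#{s ∈ T | a s ⬝ᵥ x i = 0} : ℝ) ≤ Fintype.card ι *
      (128 * (Fintype.card σ + 1) ^ 2 * M * (1 + 1 / ((D + 1) * L) ^ 2) +
        #T * (96 * (Fintype.card σ + 1) * l / (D + 1) + L)) := by
  classical
  set K : ℝ := (Fintype.card σ : ℝ) + 1 with hK
  have one_le_K : 1 ≤ K := by simp [hK]
  let Q (s : τ) : Finset ι := {i | a s ⬝ᵥ x i = 0}
  obtain ⟨W, W_nonneg, W_ge, sum_W_le⟩ := h.exists_pathEnergy_bound hl (T := T) (Q := Q) (M := M)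
    fun t ht => (hM t ht).trans' <| card_le_card fun s hs => by simpa [Q, subset_iff] using hs
  have card_le (s : τ) : (#(Q s) : ℝ) ≤ Fintype.card ι * (96 * K * l / (D + 1) + L) +
      (1 + 1 / ((D + 1) * L) ^ 2) * (32 * K ^ 2 * (W (Q s) / l ^ 2)) :=
    le_add_mul_of_mul_cube_le one_le_K hl hKl (by positivity) hL (by positivity)
      (h := hilbert (D + 1) x (Q s)) (by positivity) (W_nonneg _) (by positivity)
      (by simpa [hK] using h.mul_hilbert_filter_le (a s))
      fun hle => W_ge (Q s) (by exact_mod_cast hle)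
  calc ∑ i, (#{s ∈ T | a s ⬝ᵥ x i = 0} : ℝ)
      = ∑ s ∈ T, (#(Q s) : ℝ) := by
        exact_mod_cast (sum_card_bipartiteAbove_eq_sum_card_bipartiteBelow
          fun s i => a s ⬝ᵥ x i = 0).symm
    _ ≤ ∑ s ∈ T, (Fintype.card ι * (96 * K * l / (D + 1) + L) +
          (1 + 1 / ((D + 1) * L) ^ 2) * (32 * K ^ 2 * (W (Q s) / l ^ 2))) :=
        sum_le_sum fun s _ => card_le s
    _ = #T * (Fintype.card ι * (96 * K * l / (D + 1) + L)) +
          (1 + 1 / ((D + 1) * L) ^ 2) * (32 * K ^ 2 * ((∑ s ∈ T, W (Q s)) / l ^ 2)) := by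
        rw [sum_add_distrib, sum_const, nsmul_eq_mul, ← mul_sum, ← mul_sum, ← sum_div]
    _ ≤ #T * (Fintype.card ι * (96 * K * l / (D + 1) + L)) + (1 + 1 / ((D + 1) * L) ^ 2) *
          (32 * K ^ 2 * ((4 * M * l ^ 2 * Fintype.card ι) / l ^ 2)) := by gcongr
    _ = _ := by field_simp; ring

theorem exists_subset_sum_card_filter_le [Fintype σ] {D : ℕ} {x : ι → σ → ℝ} {P : Finset ι}
    (hP : P.Nonempty) (hx : ∀ i ∈ P, x i ≠ 0)
    (hD : 96 * (Fintype.card σ + 1) * hilbert (D + 1) x P ≤ #P) {T : Finset τ} {a : τ → σ → ℝ}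
    {M : ℕ} (hM : ∀ t ⊆ P, #t = 3 → #{s ∈ T | ∀ i ∈ t, a s ⬝ᵥ x i = 0} ≤ M)
    {L : ℝ} (hL : 0 < L) :
    ∃ Q ⊆ P, Q.Nonempty ∧ ∑ i ∈ Q, (#{s ∈ T | a s ⬝ᵥ x i = 0} : ℝ) ≤ #Q *
      (128 * (Fintype.card σ + 1) ^ 2 * M * (1 + 1 / ((D + 1) * L) ^ 2) +
        #T * (96 * (Fintype.card σ + 1) * hilbert (D + 1) x P / ((D + 1) * #P) + L)) := by
  obtain ⟨Q, hQP, hQ, l, hl, hlP, hQl⟩ := exists_isBalanced_subset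
    (v := fun i => veronese (D + 1) (x i)) hP fun i hi => veronese_ne_zero (hx i hi) (D + 1)
  have hP0 : (0 : ℝ) < #P := by exact_mod_cast hP.card_pos
  have hlP : l ≤ hilbert (D + 1) x P / #P := (le_div_iff₀ hP0).2 hlP
  have hKl : 96 * ((Fintype.card σ : ℝ) + 1) * l ≤ 1 := by
    calc 96 * ((Fintype.card σ : ℝ) + 1) * l
        ≤ 96 * (Fintype.card σ + 1) * (hilbert (D + 1) x P / #P) := by gcongr
      _ ≤ 1 := by
        rw [mul_div_assoc', div_le_one hP0]
        exact_mod_cast hD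
  refine ⟨Q, hQP, hQ, ?_⟩
  have key := hQl.sum_card_filter_le hl hKl (T := T) (a := a) (M := M) (L := L) (fun t ht => ?_) hL
  · rw [Fintype.card_coe, sum_coe_sort Q fun i => (#{s ∈ T | a s ⬝ᵥ x i = 0} : ℝ)] at key
    refine key.trans ?_
    gcongr #Q * (_ + #T * (?_ + L))
    calc 96 * ((Fintype.card σ : ℝ) + 1) * l / (D + 1)
        ≤ 96 * (Fintype.card σ + 1) * (hilbert (D + 1) x P / #P) / (D + 1) := by gcongr
      _ = _ := by field_simp
  · refine (hM (t.map (.subtype _)) (fun i hi => ?_) ((card_map _).trans ht)).trans' ?_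
    · obtain ⟨j, -, rfl⟩ := mem_map.1 hi
      exact hQP j.2
    · exact card_le_card fun s hs => by simpa using hs

theorem le_two_add_choose_three (x : ℕ) : x ≤ 2 + x.choose 3 := by
  induction x with
  | zero => exact Nat.zero_le _
  | succ x ih =>
    have : (x + 1).choose 3 = x.choose 2 + x.choose 3 := Nat.choose_succ_succ' x 2
    rcases lt_or_ge x 2 with hx | hx
    · omega
    · have := Nat.choose_pos hx
      omega

/-- The Kővári–Sós–Turán bound, by counting triples. -/
theorem sum_card_filter_le_two_mul_add {r : τ → ι → Prop} [∀ s, DecidablePred (r s)]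
    {T : Finset τ} {P : Finset ι} {M : ℕ}
    (hM : ∀ t ⊆ P, #t = 3 → #{s ∈ T | ∀ i ∈ t, r s i} ≤ M) :
    ∑ i ∈ P, #{s ∈ T | r s i} ≤ 2 * #T + M * #P ^ 3 := by
  calc ∑ i ∈ P, #{s ∈ T | r s i}
      = ∑ s ∈ T, #{i ∈ P | r s i} := (sum_card_bipartiteAbove_eq_sum_card_bipartiteBelow r).symm
    _ ≤ ∑ s ∈ T, (2 + #{t ∈ P.powersetCard 3 | ∀ i ∈ t, r s i}) := by
        refine sum_le_sum fun s _ => (le_two_add_choose_three _).trans ?_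
        rw [← card_powersetCard]
        gcongr
        intro t ht
        rw [mem_powersetCard, subset_iff] at ht
        simp only [mem_filter, mem_powersetCard] at ht ⊢
        exact ⟨⟨fun i hi => (ht.1 hi).1, ht.2⟩, fun i hi => (ht.1 hi).2⟩
    _ = 2 * #T + ∑ t ∈ P.powersetCard 3, #{s ∈ T | ∀ i ∈ t, r s i} := by
        rw [sum_add_distrib, sum_const, smul_eq_mul, mul_comm]
        congr 1
        exact sum_card_bipartiteAbove_eq_sum_card_bipartiteBelow fun s t => ∀ i ∈ t, r s i
    _ ≤ 2 * #T + ∑ _ ∈ P.powersetCard 3, M := by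
        gcongr with _ ht
        exact hM _ (mem_powersetCard.1 ht).1 (mem_powersetCard.1 ht).2
    _ ≤ 2 * #T + M * #P ^ 3 := by
        rw [sum_const, smul_eq_mul, mul_comm _ M, card_powersetCard]
        gcongr
        exact Nat.choose_le_pow _ _

/-- The witnesses balance the bounds: `D + 1 ≈ √(X ^ 3 / Y) / B` up to a factor of two, and
`L = 1 / (X * Y)`, so that `Y ^ 4 * L = Y ^ 3 / X`. -/
theorem exists_degree_and_scale {B X Y : ℝ} (hB : 1 ≤ B) (hX : 0 < X) (hY : 0 < Y)
    (hXY : X ≤ Y ^ 3) (hBY : B ^ 2 * Y ≤ X ^ 3) :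
    ∃ D : ℕ, ∃ L : ℝ, 0 < L ∧ B * (D + 1) ^ 3 ≤ X ^ 4 ∧
      1 / ((D + 1) * L) ^ 2 ≤ 4 * B ^ 2 * (Y ^ 3 / X) ∧
      Y ^ 4 * (B * (D + 1) ^ 2 / X ^ 4 + L) ≤ 2 * (Y ^ 3 / X) := by
  set e := √(X ^ 3 / Y) / B with he
  have he_sq : e ^ 2 * (B ^ 2 * Y) = X ^ 3 := by
    rw [he, div_pow, Real.sq_sqrt (by positivity)]
    field_simp
  have one_le_e : 1 ≤ e := by
    rw [he, one_le_div (by positivity)]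
    exact Real.le_sqrt_of_sq_le ((le_div_iff₀ hY).2 hBY)
  obtain ⟨D, hD⟩ := Nat.exists_eq_succ_of_ne_zero (Nat.floor_pos.2 one_le_e).ne'
  have le_e : (D : ℝ) + 1 ≤ e := by exact_mod_cast hD ▸ Nat.floor_le (by positivity)
  have e_le : e ≤ 2 * (D + 1) := by
    have := Nat.lt_floor_add_one e
    rw [hD] at this
    push_cast at this
    linarith
  have upper : (D + 1) ^ 2 * (B ^ 2 * Y) ≤ X ^ 3 := by rw [← he_sq]; gcongr
  have lower : X ^ 3 ≤ (2 * (D + 1)) ^ 2 * (B ^ 2 * Y) := by rw [← he_sq]; gcongr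
  refine ⟨D, 1 / (X * Y), by positivity, ?_, ?_, ?_⟩
  · refine le_of_pow_le_pow_left₀ two_ne_zero (by positivity) (le_of_mul_le_mul_right ?_ hX)
    calc (B * (D + 1) ^ 3) ^ 2 * X = (D + 1) ^ 6 * B ^ 2 * X := by ring
      _ ≤ (D + 1) ^ 6 * B ^ 6 * Y ^ 3 := by gcongr; norm_num
      _ = ((D + 1) ^ 2 * (B ^ 2 * Y)) ^ 3 := by ring
      _ ≤ (X ^ 3) ^ 3 := by gcongr
      _ = (X ^ 4) ^ 2 * X := by ring
  · rw [mul_one_div, div_pow, one_div_div, mul_div_assoc', div_le_div_iff₀ (by positivity) hX]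
    calc (X * Y) ^ 2 * X = X ^ 3 * Y ^ 2 := by ring
      _ ≤ (2 * (D + 1)) ^ 2 * (B ^ 2 * Y) * Y ^ 2 := by gcongr
      _ = _ := by ring
  · have h1 : Y ^ 4 * (B * (D + 1) ^ 2 / X ^ 4) ≤ Y ^ 3 / X := by
      rw [mul_div_assoc', div_le_div_iff₀ (by positivity) hX]
      calc Y ^ 4 * (B * (D + 1) ^ 2) * X = (D + 1) ^ 2 * (B * Y) * Y ^ 3 * X := by ring
        _ ≤ (D + 1) ^ 2 * (B ^ 2 * Y) * Y ^ 3 * X := by gcongr; exact le_self_pow₀ hB two_ne_zero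
        _ ≤ X ^ 3 * Y ^ 3 * X := by gcongr
        _ = _ := by ring
    have h2 : Y ^ 4 * (1 / (X * Y)) = Y ^ 3 / X := by field_simp
    linarith

theorem exists_degree_and_scale_of_pow_le {B y z : ℝ} (hB : 1 ≤ B) (hy : 0 ≤ y) (hz : 0 < z)
    (hBz : B ^ 3 ≤ z ^ 12) (hBy : B ^ 8 * y ^ 4 ≤ (z ^ 12) ^ 3) :
    ∃ D : ℕ, ∃ L : ℝ, 0 < L ∧ B * (D + 1) ^ 3 ≤ z ^ 12 ∧
      1 / ((D + 1) * L) ^ 2 ≤ 4 * B ^ 2 * (1 + y ^ 3 / z ^ 3) ∧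
      y ^ 4 * (B * (D + 1) ^ 2 / z ^ 12 + L) ≤ 2 * (1 + y ^ 3 / z ^ 3) := by
  have hBz : B ^ 2 ≤ z ^ 8 := by
    refine le_of_pow_le_pow_left₀ three_ne_zero (by positivity) ?_
    calc (B ^ 2) ^ 3 = (B ^ 3) ^ 2 := by ring
      _ ≤ (z ^ 12) ^ 2 := by gcongr
      _ = (z ^ 8) ^ 3 := by ring
  have hBy : B ^ 2 * y ≤ (z ^ 3) ^ 3 := by
    refine le_of_pow_le_pow_left₀ four_ne_zero (by positivity) ?_
    linear_combination hBy
  have hBmax : B ^ 2 * max y z ≤ (z ^ 3) ^ 3 := by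
    rw [mul_max_of_nonneg _ _ (by positivity), max_le_iff]
    refine ⟨hBy, ?_⟩
    calc B ^ 2 * z ≤ z ^ 8 * z := by gcongr
      _ = (z ^ 3) ^ 3 := by ring
  have ratio_le : max y z ^ 3 / z ^ 3 ≤ 1 + y ^ 3 / z ^ 3 := by
    rw [div_le_iff₀ (by positivity), add_mul, one_mul, div_mul_cancel₀ _ (by positivity)]
    rcases max_cases y z with h | h <;> rw [h.1] <;> linarith [pow_pos hz 3, pow_nonneg hy 3]
  obtain ⟨D, L, hL, hD, hDL, hnL⟩ := exists_degree_and_scale hB (pow_pos hz 3)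
    (lt_max_of_lt_right hz) (pow_le_pow_left₀ hz.le (le_max_right y z) 3) hBmax
  rw [← pow_mul] at hD hnL
  refine ⟨D, L, hL, hD, hDL.trans (by gcongr), ?_⟩
  calc y ^ 4 * (B * (D + 1) ^ 2 / z ^ 12 + L)
      ≤ max y z ^ 4 * (B * (D + 1) ^ 2 / z ^ 12 + L) := by gcongr; exact le_max_left y z
    _ ≤ 2 * (max y z ^ 3 / z ^ 3) := hnL
    _ ≤ _ := by gcongr

theorem exists_degree_and_scale_rpow {B m n : ℝ} (hB : 1 ≤ B) (hn : 0 ≤ n) (hm : B ^ 3 ≤ m)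
    (hmn : B ^ 8 * n ≤ m ^ 3) :
    ∃ D : ℕ, ∃ L : ℝ, 0 < L ∧ B * (D + 1) ^ 3 ≤ m ∧
      1 / ((D + 1) * L) ^ 2 ≤ 4 * B ^ 2 * (1 + n ^ (3 / 4 : ℝ) / m ^ (1 / 4 : ℝ)) ∧
      n * (B * (D + 1) ^ 2 / m + L) ≤ 2 * (1 + n ^ (3 / 4 : ℝ) / m ^ (1 / 4 : ℝ)) := by
  have hm0 : 0 < m := (pow_pos (by linarith) 3).trans_le hm
  obtain ⟨z, hz, rfl⟩ : ∃ z > 0, z ^ 12 = m :=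
    ⟨m ^ (1 / 12 : ℝ), by positivity, by rw [← Real.rpow_mul_natCast hm0.le]; norm_num⟩
  obtain ⟨y, hy, rfl⟩ : ∃ y ≥ 0, y ^ 4 = n :=
    ⟨n ^ (1 / 4 : ℝ), by positivity, by rw [← Real.rpow_mul_natCast hn]; norm_num⟩
  have hz3 : (z ^ 12) ^ (1 / 4 : ℝ) = z ^ 3 := by
    rw [← Real.rpow_natCast_mul hz.le, ← Real.rpow_natCast]; norm_num
  have hy3 : (y ^ 4) ^ (3 / 4 : ℝ) = y ^ 3 := by
    rw [← Real.rpow_natCast_mul hy, ← Real.rpow_natCast]; norm_num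
  rw [hz3, hy3]
  exact exists_degree_and_scale_of_pow_le hB hy hz hm hmn

theorem sum_le_of_forall_exists_subset [DecidableEq ι] {w : ι → ℝ} {φ : ℕ → ℝ} {c : ℝ}
    (hφ : ∀ n, 0 ≤ φ n) {P : Finset ι}
    (h : ∀ R ⊆ P, ∑ i ∈ R, w i ≤ c ∨
      ∃ Q ⊆ R, Q.Nonempty ∧ ∑ i ∈ Q, w i + φ #(R \ Q) ≤ φ #R) :
    ∑ i ∈ P, w i ≤ c + φ #P := by
  induction P using Finset.strongInduction with
  | H P ih =>
    rcases h P subset_rfl with hP | ⟨Q, hQP, hQ, hw⟩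
    · exact hP.trans (le_add_of_nonneg_right (hφ _))
    · have := ih (P \ Q) (sdiff_ssubset hQP hQ) fun R hR => h R (hR.trans sdiff_subset)
      rw [← sum_sdiff hQP]
      linarith

theorem mul_rpow_sub_one_le_rpow_sub_rpow {p m q : ℝ} (hp : 0 ≤ p) (hp1 : p ≤ 1) (hm : 0 < m)
    (hqm : q ≤ m) : p * q * m ^ (p - 1) ≤ m ^ p - (m - q) ^ p := by
  have hs : -1 ≤ -(q / m) := neg_le_neg ((div_le_one hm).2 hqm)
  have := rpow_one_add_le_one_add_mul_self hs hp hp1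
  have factor : (m - q) ^ p = m ^ p * (1 + -(q / m)) ^ p := by
    rw [← Real.mul_rpow hm.le (by linarith), mul_add, mul_one, mul_neg, mul_div_cancel₀ _ hm.ne',
      sub_eq_add_neg]
  calc p * q * m ^ (p - 1) = m ^ p - m ^ p * (1 + p * -(q / m)) := by
        rw [Real.rpow_sub_one hm.ne']; ring
    _ ≤ m ^ p - (m - q) ^ p := by rw [factor]; gcongr

theorem exists_subset_sum_card_filter_le_rpow [Fintype σ] {B : ℝ} (hB : 1 ≤ B)
    {x : ι → σ → ℝ} {P : Finset ι} (hx : ∀ i ∈ P, x i ≠ 0)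
    (hPB : ∀ D : ℕ, 96 * (Fintype.card σ + 1) * hilbert (D + 1) x P ≤ B * (D + 1) ^ 3)
    {T : Finset τ} {a : τ → σ → ℝ} {M : ℕ}
    (hM : ∀ t ⊆ P, #t = 3 → #{s ∈ T | ∀ i ∈ t, a s ⬝ᵥ x i = 0} ≤ M)
    (hP : B ^ 3 ≤ #P) (hTP : B ^ 8 * #T ≤ (#P : ℝ) ^ 3) :
    ∃ Q ⊆ P, Q.Nonempty ∧ ∑ i ∈ Q, (#{s ∈ T | a s ⬝ᵥ x i = 0} : ℝ) ≤
      (128 * (Fintype.card σ + 1) ^ 2 * M * (1 + 4 * B ^ 2) + 2) *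
        (#Q * (1 + #T ^ (3 / 4 : ℝ) / #P ^ (1 / 4 : ℝ))) := by
  obtain ⟨D, L, hL, hD, hDL, hnL⟩ := exists_degree_and_scale_rpow hB (#T).cast_nonneg hP hTP
  have hP0 : (0 : ℝ) < #P := (pow_pos (by linarith) 3).trans_le hP
  obtain ⟨Q, hQP, hQ, hQ_le⟩ := exists_subset_sum_card_filter_le (D := D)
    (card_pos.1 (by exact_mod_cast hP0)) hx (by exact_mod_cast (hPB D).trans hD) hM hL
  refine ⟨Q, hQP, hQ, hQ_le.trans ?_⟩
  set ρ : ℝ := 1 + #T ^ (3 / 4 : ℝ) / #P ^ (1 / 4 : ℝ) with hρ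
  have one_le_ρ : 1 ≤ ρ := le_add_of_nonneg_right (by positivity)
  have degree_le : 96 * (Fintype.card σ + 1) * hilbert (D + 1) x P / ((D + 1) * #P) ≤
      B * (D + 1) ^ 2 / #P := by
    rw [div_le_div_iff₀ (by positivity) hP0]
    calc 96 * ((Fintype.card σ : ℝ) + 1) * hilbert (D + 1) x P * #P
        ≤ B * (D + 1) ^ 3 * #P := mul_le_mul_of_nonneg_right (hPB D) hP0.le
      _ = B * (D + 1) ^ 2 * ((D + 1) * #P) := by ring
  calc #Q * (128 * ((Fintype.card σ : ℝ) + 1) ^ 2 * M * (1 + 1 / ((D + 1) * L) ^ 2) +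
        #T * (96 * (Fintype.card σ + 1) * hilbert (D + 1) x P / ((D + 1) * #P) + L))
      ≤ #Q * (128 * (Fintype.card σ + 1) ^ 2 * M * (ρ + 4 * B ^ 2 * ρ) +
          #T * (B * (D + 1) ^ 2 / #P + L)) := by gcongr
    _ ≤ #Q * (128 * (Fintype.card σ + 1) ^ 2 * M * (ρ + 4 * B ^ 2 * ρ) + 2 * ρ) := by gcongr
    _ = _ := by ring

theorem card_mul_one_add_div_rpow_add_le [DecidableEq ι] {Q R : Finset ι} (hQR : Q ⊆ R)
    (hR : R.Nonempty) {N : ℝ} (hN : 0 ≤ N) :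
    #Q * (1 + N / #R ^ (1 / 4 : ℝ)) + (#(R \ Q) + 4 / 3 * #(R \ Q) ^ (3 / 4 : ℝ) * N) ≤
      #R + 4 / 3 * #R ^ (3 / 4 : ℝ) * N := by
  have card_le : (#Q : ℝ) ≤ #R := by exact_mod_cast card_le_card hQR
  have concave := mul_le_mul_of_nonneg_right (mul_rpow_sub_one_le_rpow_sub_rpow
    (p := 3 / 4) (by norm_num) (by norm_num) (by exact_mod_cast hR.card_pos) card_le) hN
  rw [show (3 / 4 - 1 : ℝ) = -(1 / 4) by norm_num, Real.rpow_neg (by positivity)] at concave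
  rw [cast_card_sdiff hQR, div_eq_mul_inv]
  linear_combination 4 / 3 * concave

theorem sum_card_filter_le_of_lt {r : τ → ι → Prop} [∀ s, DecidablePred (r s)] {T : Finset τ}
    {P : Finset ι} {M : ℕ} (hM : ∀ t ⊆ P, #t = 3 → #{s ∈ T | ∀ i ∈ t, r s i} ≤ M) {b c : ℝ}
    (hb : 0 ≤ b) (hc : 0 ≤ c) (h : #P < b ∨ (#P : ℝ) ^ 3 < c * #T) :
    ∑ i ∈ P, (#{s ∈ T | r s i} : ℝ) ≤ (b + 2 + M * c) * #T := by
  rcases h with h | h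
  · calc ∑ i ∈ P, (#{s ∈ T | r s i} : ℝ) ≤ ∑ _ ∈ P, (#T : ℝ) :=
          sum_le_sum fun i _ => by exact_mod_cast card_filter_le T fun s => r s i
      _ = #P * #T := by rw [sum_const, nsmul_eq_mul]
      _ ≤ (b + 2 + M * c) * #T := by
          gcongr
          linarith [mul_nonneg M.cast_nonneg hc]
  · calc ∑ i ∈ P, (#{s ∈ T | r s i} : ℝ) ≤ 2 * #T + M * #P ^ 3 := by
          exact_mod_cast sum_card_filter_le_two_mul_add hM
      _ ≤ 2 * #T + M * (c * #T) := by gcongr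
      _ ≤ (b + 2 + M * c) * #T := by linarith [mul_nonneg hb (#T).cast_nonneg]

theorem exists_sum_card_filter_le (ι σ τ : Type*) [Fintype σ] (C : ℝ) (M : ℕ) :
    ∃ A : ℝ, 0 < A ∧ ∀ (x : ι → σ → ℝ) (a : τ → σ → ℝ) (P : Finset ι) (T : Finset τ),
      (∀ i ∈ P, x i ≠ 0) → (∀ D : ℕ, hilbert (D + 1) x P ≤ C * (D + 1) ^ 3) →
      (∀ t ⊆ P, #t = 3 → #{s ∈ T | ∀ i ∈ t, a s ⬝ᵥ x i = 0} ≤ M) →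
      ∑ i ∈ P, (#{s ∈ T | a s ⬝ᵥ x i = 0} : ℝ) ≤
        A * (#P ^ (3 / 4 : ℝ) * #T ^ (3 / 4 : ℝ) + #P + #T) := by
  classical
  set B : ℝ := max 1 (96 * (Fintype.card σ + 1) * C)
  have one_le_B : 1 ≤ B := le_max_left _ _
  have B_nonneg : 0 ≤ B := by linarith
  let A₀ : ℝ := 128 * (Fintype.card σ + 1) ^ 2 * M * (1 + 4 * B ^ 2) + 2
  let A₁ : ℝ := B ^ 3 + 2 + M * B ^ 8
  refine ⟨A₁ + 4 / 3 * A₀, by positivity, fun x a P T hx hC hM => ?_⟩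
  let φ (m : ℕ) : ℝ := A₀ * (m + 4 / 3 * m ^ (3 / 4 : ℝ) * #T ^ (3 / 4 : ℝ))
  have hilbert_le : ∀ R ⊆ P, ∀ D : ℕ,
      96 * (Fintype.card σ + 1) * hilbert (D + 1) x R ≤ B * (D + 1) ^ 3 := by
    intro R hR D
    calc 96 * ((Fintype.card σ : ℝ) + 1) * hilbert (D + 1) x R
        ≤ 96 * (Fintype.card σ + 1) * (C * (D + 1) ^ 3) := by
          gcongr
          exact (hC D).trans' (by exact_mod_cast hilbert_mono _ x hR)
      _ = 96 * (Fintype.card σ + 1) * C * (D + 1) ^ 3 := by ring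
      _ ≤ B * (D + 1) ^ 3 := by gcongr; exact le_max_right _ _
  have peel : ∀ R ⊆ P, ∑ i ∈ R, (#{s ∈ T | a s ⬝ᵥ x i = 0} : ℝ) ≤ A₁ * #T ∨ ∃ Q ⊆ R, Q.Nonempty ∧
      ∑ i ∈ Q, (#{s ∈ T | a s ⬝ᵥ x i = 0} : ℝ) + φ #(R \ Q) ≤ φ #R := by
    intro R hR
    have hMR := fun t (ht : t ⊆ R) => hM t (ht.trans hR)
    rcases lt_or_ge (#R : ℝ) (B ^ 3) with hB3 | hB3
    · exact .inl (sum_card_filter_le_of_lt hMR (by positivity) (by positivity) (.inl hB3))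
    rcases lt_or_ge ((#R : ℝ) ^ 3) (B ^ 8 * #T) with hB8 | hB8
    · exact .inl (sum_card_filter_le_of_lt hMR (by positivity) (by positivity) (.inr hB8))
    obtain ⟨Q, hQR, hQ, hQ_le⟩ := exists_subset_sum_card_filter_le_rpow one_le_B
      (fun i hi => hx i (hR hi)) (hilbert_le R hR) hMR hB3 hB8
    refine .inr ⟨Q, hQR, hQ, (add_le_add_left hQ_le _).trans ?_⟩
    rw [← mul_add]
    exact mul_le_mul_of_nonneg_left (card_mul_one_add_div_rpow_add_le hQR (hQ.mono hQR)
      (by positivity)) (by positivity)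
  refine (sum_le_of_forall_exists_subset (fun m => by positivity) peel).trans ?_
  have h1 : 0 ≤ A₀ * #P := by positivity
  have h2 : 0 ≤ A₀ * #T := by positivity
  have h3 : 0 ≤ A₁ * (#P ^ (3 / 4 : ℝ) * #T ^ (3 / 4 : ℝ) + #P) := by positivity
  linear_combination h1 / 3 + 4 / 3 * h2 + h3

end Peeling

section Planes

variable {E : Type*} [NormedAddCommGroup E] [InnerProductSpace ℝ E] {u : E} {d : ℝ}

theorem exists_unit_normal (hu : u ≠ 0) (d : ℝ) :
    ∃ (v : E) (e : ℝ), ‖v‖ = 1 ∧ {x : E | ⟪u, x⟫ = d} = {x | ⟪v, x⟫ = e} := by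
  have inv_norm_ne_zero : ‖u‖⁻¹ ≠ 0 := inv_ne_zero (norm_ne_zero_iff.2 hu)
  refine ⟨‖u‖⁻¹ • u, ‖u‖⁻¹ * d, norm_smul_inv_norm hu, ?_⟩
  ext x
  rw [Set.mem_ofPred_eq, Set.mem_ofPred_eq, real_inner_smul_left, mul_right_inj' inv_norm_ne_zero]

theorem inner_sub_inner_sub_smul (hu : ‖u‖ = 1) (c : E) (d : ℝ) :
    ⟪u, c - (⟪u, c⟫ - d) • u⟫ = d := by
  simp [inner_sub_right, real_inner_smul_right, hu]

-- Pythagoras, with `c - (⟪u, c⟫ - d) • u` the foot of the perpendicular from `c` to the plane.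
theorem dist_sq_eq_of_inner_eq (hu : ‖u‖ = 1) (c : E) {x : E} (hx : ⟪u, x⟫ = d) :
    dist x c ^ 2 = (⟪u, c⟫ - d) ^ 2 + ‖x - (c - (⟪u, c⟫ - d) • u)‖ ^ 2 := by
  set t := ⟪u, c⟫ - d
  have inner_eq_zero : ⟪x - (c - t • u), t • u⟫ = 0 := by
    rw [real_inner_smul_right, real_inner_comm, inner_sub_right, inner_sub_inner_sub_smul hu, hx,
      sub_self, mul_zero]
  rw [dist_eq_norm, show x - c = x - (c - t • u) - t • u by abel, norm_sub_sq_real, inner_eq_zero,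
    norm_smul, hu, mul_one, Real.norm_eq_abs, sq_abs]
  ring

theorem exists_inter_sphere_eq_singleton_iff (hu : ‖u‖ = 1) (c : E) (r : ℝ) :
    (∃ p, {x : E | ⟪u, x⟫ = d} ∩ Metric.sphere c r = {p}) ↔ |⟪u, c⟫ - d| = r := by
  set t := ⟪u, c⟫ - d
  set f := c - t • u with hf
  have inner_foot : ⟪u, f⟫ = d := inner_sub_inner_sub_smul hu c d
  have dist_foot : dist f c = |t| := by
    rw [dist_eq_norm, show f - c = -(t • u) by rw [hf]; abel, norm_neg, norm_smul, hu, mul_one,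
      Real.norm_eq_abs]
  constructor
  · rintro ⟨p, hp⟩
    obtain ⟨hpd, hpr⟩ : p ∈ {x : E | ⟪u, x⟫ = d} ∩ Metric.sphere c r := hp ▸ rfl
    have reflection_mem : (2 : ℝ) • f - p ∈ {x : E | ⟪u, x⟫ = d} ∩ Metric.sphere c r := by
      have inner_reflection : ⟪u, (2 : ℝ) • f - p⟫ = d := by
        rw [inner_sub_right, real_inner_smul_right, inner_foot, hpd]
        ring
      refine ⟨inner_reflection, ?_⟩
      rw [Metric.mem_sphere, ← hpr, ← sq_eq_sq₀ dist_nonneg dist_nonneg,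
        dist_sq_eq_of_inner_eq hu c hpd, dist_sq_eq_of_inner_eq hu c inner_reflection,
        show (2 : ℝ) • f - p - f = -(p - f) by rw [two_smul]; abel, norm_neg]
    have reflection_eq : (2 : ℝ) • f - p = p := by rwa [hp] at reflection_mem
    have foot_eq : f = p := by
      rw [sub_eq_iff_eq_add, ← two_smul ℝ p] at reflection_eq
      exact smul_right_injective E two_ne_zero reflection_eq
    rw [← dist_foot, foot_eq, hpr]
  · rintro rfl
    refine ⟨f, Set.eq_singleton_iff_unique_mem.2 ⟨⟨inner_foot, dist_foot⟩, ?_⟩⟩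
    rintro x ⟨hxd, hxr⟩
    have pythagoras := dist_sq_eq_of_inner_eq hu c hxd
    rw [Metric.mem_sphere.1 hxr, sq_abs, left_eq_add, sq_eq_zero_iff, norm_sub_eq_zero_iff]
      at pythagoras
    exact pythagoras

end Planes

section Tangency

/-- The homogeneous coordinates, in projective 4-space, of the plane with unit normal `u` and
offset `d`. It lies on the quadric `x₀² + x₁² + x₂² = x₄²`. -/
def planePoint (u : Pt3) (d : ℝ) : Fin 5 → ℝ :=
  ![u 0, u 1, u 2, d, 1]

/-- The coefficients of the hyperplane, in projective 4-space, of the oriented planes at signed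
distance `-r` from `c`. A sphere gives two of them, one for `r` and one for `-r`. -/
def sphereForm (c : Pt3) (r : ℝ) : Fin 5 → ℝ :=
  ![c 0, c 1, c 2, -1, r]

theorem sphereForm_dotProduct_planePoint (c : Pt3) (r : ℝ) (u : Pt3) (d : ℝ) :
    sphereForm c r ⬝ᵥ planePoint u d = ⟪u, c⟫ - d + r := by
  simp [dotProduct, sphereForm, planePoint, Fin.sum_univ_five, PiLp.inner_apply,
    Fin.sum_univ_three]
  ring

theorem planePoint_ne_zero (u : Pt3) (d : ℝ) : planePoint u d ≠ 0 :=
  fun h => one_ne_zero (congrFun h 4)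

theorem planePoint_zero_sq {u : Pt3} (hu : ‖u‖ = 1) (d : ℝ) :
    planePoint u d 0 ^ 2 =
      ∑ j, (![-1, -1, 0, 1] : Fin 4 → ℝ) j * planePoint u d j.succ ^ 2 := by
  have norm_sq := EuclideanSpace.real_norm_sq_eq u
  rw [hu, Fin.sum_univ_three] at norm_sq
  rw [Fin.sum_univ_four]
  change u 0 ^ 2 = -1 * u 1 ^ 2 + -1 * u 2 ^ 2 + 0 * d ^ 2 + 1 * 1 ^ 2
  linarith

theorem hilbert_planePoint_le {ι : Type*} {u : ι → Pt3} {P : Finset ι} (hu : ∀ i ∈ P, ‖u i‖ = 1)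
    (d : ι → ℝ) (D : ℕ) :
    (hilbert (D + 1) (fun i => planePoint (u i) (d i)) P : ℝ) ≤ 16 * (D + 1) ^ 3 := by
  have hilbert_le : hilbert (D + 1) (fun i => planePoint (u i) (d i)) P ≤ 2 * (D + 1 + 1) ^ 3 :=
    hilbert_le_of_quadric (fun i hi => planePoint_zero_sq (hu i hi) (d i)) (D + 1)
  calc (hilbert (D + 1) (fun i => planePoint (u i) (d i)) P : ℝ)
      ≤ 2 * (D + 1 + 1) ^ 3 := by exact_mod_cast hilbert_le
    _ ≤ 2 * (2 * (D + 1)) ^ 3 := by gcongr; linarith [D.cast_nonneg (α := ℝ)]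
    _ = 16 * (D + 1) ^ 3 := by ring

theorem tangent3_iff_sphereForm {u : Pt3} (hu : ‖u‖ = 1) (d : ℝ) (c : Pt3) {r : ℝ} (hr : 0 < r) :
    Tangent3 {x | ⟪u, x⟫ = d} (Metric.sphere c r) ↔
      sphereForm c r ⬝ᵥ planePoint u d = 0 ∨ sphereForm c (-r) ⬝ᵥ planePoint u d = 0 := by
  rw [Tangent3, exists_inter_sphere_eq_singleton_iff hu, abs_eq hr.le, or_comm,
    sphereForm_dotProduct_planePoint, sphereForm_dotProduct_planePoint, ← sub_eq_add_neg,
    sub_eq_zero, add_eq_zero_iff_eq_neg]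

theorem exists_dotProduct_eq_zero_iff_tangent3 {Pl S : Finset (Set Pt3)}
    (hPl : ∀ q ∈ Pl, IsPlane3 q) (hS : ∀ s ∈ S, IsSphere3 s) :
    ∃ x f g : Set Pt3 → Fin 5 → ℝ, (∀ q ∈ Pl, x q ≠ 0) ∧
      (∀ D : ℕ, hilbert (D + 1) x Pl ≤ (16 * (D + 1) ^ 3 : ℝ)) ∧
      ∀ q ∈ Pl, ∀ s ∈ S, Tangent3 q s ↔ f s ⬝ᵥ x q = 0 ∨ g s ⬝ᵥ x q = 0 := by
  have exists_normal : ∀ q ∈ Pl, ∃ (u : Pt3) (d : ℝ), ‖u‖ = 1 ∧ q = {x | ⟪u, x⟫ = d} := by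
    intro q hq
    obtain ⟨u, d, hu, rfl⟩ := hPl q hq
    exact exists_unit_normal hu d
  choose! u d hu hq using exists_normal
  choose! c r hr hs using hS
  refine ⟨fun q => planePoint (u q) (d q), fun s => sphereForm (c s) (r s),
    fun s => sphereForm (c s) (-r s), fun q _ => planePoint_ne_zero _ _,
    hilbert_planePoint_le hu d, fun q hqPl s hsS => ?_⟩
  rw [← tangent3_iff_sphereForm (hu q hqPl) (d q) (c s) (hr s hsS), ← hq q hqPl, ← hs s hsS]

open Classical in
theorem ncard_tangent3 (Pl S : Finset (Set Pt3)) :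
    {q : Set Pt3 × Set Pt3 | q.1 ∈ Pl ∧ q.2 ∈ S ∧ Tangent3 q.1 q.2}.ncard =
      ∑ q ∈ Pl, #{s ∈ S | Tangent3 q s} := by
  have eq_filter : {q : Set Pt3 × Set Pt3 | q.1 ∈ Pl ∧ q.2 ∈ S ∧ Tangent3 q.1 q.2} =
      ↑{q ∈ Pl ×ˢ S | Tangent3 q.1 q.2} := by
    ext q
    simp [and_assoc]
  simp only [eq_filter, Set.ncard_coe_finset, card_filter, sum_product]

open Classical in
theorem card_filter_tangent3_le {Pl S : Finset (Set Pt3)} {M : ℕ}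
    (hM : ¬ ∃ F : Finset (Set Pt3), F ⊆ Pl ∧ ∃ G : Finset (Set Pt3), G ⊆ S ∧
      F.card = 3 ∧ G.card = M ∧ ∀ q ∈ F, ∀ s ∈ G, Tangent3 q s)
    {F : Finset (Set Pt3)} (hF : F ⊆ Pl) (hF3 : #F = 3) :
    #{s ∈ S | ∀ q ∈ F, Tangent3 q s} ≤ M := by
  by_contra! h
  obtain ⟨G, hG, hGM⟩ := exists_subset_card_eq h.le
  exact hM ⟨F, hF, G, hG.trans (filter_subset _ _), hF3, hGM,
    fun q hq s hs => (mem_filter.1 (hG hs)).2 q hq⟩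

end Tangency

end PlaneSphere

open Finset Matrix PlaneSphere in
theorem plane_sphere_tangencies_general (M : ℕ) :
    ∃ A : ℝ, 0 < A ∧
      ∀ Pl S : Finset (Set Pt3), (∀ q ∈ Pl, IsPlane3 q) → (∀ s ∈ S, IsSphere3 s) →
        (¬ ∃ F : Finset (Set Pt3), F ⊆ Pl ∧ ∃ G : Finset (Set Pt3), G ⊆ S ∧
          F.card = 3 ∧ G.card = M ∧ ∀ q ∈ F, ∀ s ∈ G, Tangent3 q s) →
        ({q : Set Pt3 × Set Pt3 | q.1 ∈ Pl ∧ q.2 ∈ S ∧ Tangent3 q.1 q.2}.ncard : ℝ) ≤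
          A * (Pl.card ^ (3 / 4 : ℝ) * S.card ^ (3 / 4 : ℝ) + Pl.card + S.card) := by
  classical
  obtain ⟨A, hA, sum_le⟩ := exists_sum_card_filter_le (Set Pt3) (Fin 5) (Set Pt3) 16 M
  refine ⟨2 * A, by positivity, fun Pl S hPl hS hM => ?_⟩
  obtain ⟨x, f, g, hx, hilbert_le, tangent_iff⟩ := exists_dotProduct_eq_zero_iff_tangent3 hPl hS
  have sum_form_le (h : Set Pt3 → Fin 5 → ℝ)
      (tangent_of : ∀ q ∈ Pl, ∀ s ∈ S, h s ⬝ᵥ x q = 0 → Tangent3 q s) :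
      ∑ q ∈ Pl, (#{s ∈ S | h s ⬝ᵥ x q = 0} : ℝ) ≤
        A * (#Pl ^ (3 / 4 : ℝ) * #S ^ (3 / 4 : ℝ) + #Pl + #S) := by
    refine sum_le x h Pl S hx hilbert_le fun F hF hF3 =>
      (card_le_card fun s hs => ?_).trans (card_filter_tangent3_le hM hF hF3)
    simp only [mem_filter] at hs ⊢
    exact ⟨hs.1, fun q hq => tangent_of q (hF hq) s hs.1 (hs.2 q hq)⟩
  calc ({q : Set Pt3 × Set Pt3 | q.1 ∈ Pl ∧ q.2 ∈ S ∧ Tangent3 q.1 q.2}.ncard : ℝ)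
      = ∑ q ∈ Pl, (#{s ∈ S | Tangent3 q s} : ℝ) := by exact_mod_cast ncard_tangent3 Pl S
    _ ≤ ∑ q ∈ Pl, (#{s ∈ S | f s ⬝ᵥ x q = 0} + #{s ∈ S | g s ⬝ᵥ x q = 0} : ℝ) := by
        refine sum_le_sum fun q hqP => ?_
        rw [filter_congr (tangent_iff q hqP), filter_or]
        exact_mod_cast card_union_le _ _
    _ ≤ 2 * A * (#Pl ^ (3 / 4 : ℝ) * #S ^ (3 / 4 : ℝ) + #Pl + #S) := by
        rw [sum_add_distrib]
        have h1 := sum_form_le f fun q hq s hs h => (tangent_iff q hq s hs).2 (.inl h)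
        have h2 := sum_form_le g fun q hq s hs h => (tangent_iff q hq s hs).2 (.inr h)
        linarith

theorem plane_sphere_tangencies (M : ℕ) :
    ∃ A : ℝ, 0 < A ∧
      ∀ (n k : ℕ) (Pl S : Finset (Set Pt3)),
        Pl.card = n → S.card = k →
        (∀ q ∈ Pl, IsPlane3 q) → (∀ s ∈ S, IsSphere3 s) →
        (¬ ∃ F : Finset (Set Pt3), F ⊆ Pl ∧ ∃ G : Finset (Set Pt3), G ⊆ S ∧
          F.card = M ∧ G.card = 3 ∧ ∀ q ∈ F, ∀ s ∈ G, Tangent3 q s) →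
        (¬ ∃ F : Finset (Set Pt3), F ⊆ Pl ∧ ∃ G : Finset (Set Pt3), G ⊆ S ∧
          F.card = 3 ∧ G.card = M ∧ ∀ q ∈ F, ∀ s ∈ G, Tangent3 q s) →
        (({q : Set Pt3 × Set Pt3 | q.1 ∈ Pl ∧ q.2 ∈ S ∧ Tangent3 q.1 q.2}).ncard : ℝ) ≤
          A * ((n : ℝ) ^ ((3 : ℝ) / 4) * (k : ℝ) ^ ((3 : ℝ) / 4) + (n : ℝ) + (k : ℝ)) := by
  obtain ⟨A, hA, ncard_le⟩ := plane_sphere_tangencies_general M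
  refine ⟨A, hA, ?_⟩
  rintro _ _ Pl S rfl rfl hPl hS - hM
  exact ncard_le Pl S hPl hS hM
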